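/- Let n ≥ 3 and ℓ ≥ 1 be integers and put μ = 1/(2(n−1)ℓ). There exist real numbers X₀ > 0 and c > 0 (depending only on n and ℓ) such that for every real X > X₀ there exist at least c·X^μ pairwise non-isomorphic number fields of degree n over ℚ whose discriminant has absolute value at most X and whose ideal class group contains an element of order exactly ℓ. -/

import Mathlib

/-- A finite-dimensional intermediate field of `ℂ/ℚ` is a number field. -/
noncomputable instance (F : IntermediateField ℚ ℂ) [FiniteDimensional ℚ F] :
    NumberField F := ⟨⟩

/-!
Write `n = d + 1`, choose integers `u` and `b 0, …, b d` such that each `u * b i + 1` is an `ℓ`-th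
power, and let `x` be a root of `∏ i, (X - b i) - (u * X + 1)`. Then `x - b i` divides
`u * b i + 1`, and if it is coprime to its cofactor, the ideal `(x - b i)` is the `ℓ`-th power of an
ideal `I i`. If for some prime `p ∣ ℓ` the exponent of the `ℓ`-torsion of the class group divided
`ℓ / p`, every `x - b i` would be a unit times a `p`-th power. As the unit rank is less than `n`,
some product `∏ i, (x - b i) ^ e i` with exponents in `[0, p)`, not all zero, would be `±` a `p`-th
power. Residues at degree one primes above divisors of `u` force all `e i` to be equal, so that
`u * x + 1 = ∏ i, (x - b i)` itself is `±` a `p`-th power. This contradicts the sizes of its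
conjugates: if `b d` is much larger than `u` and the other `b i`, the conjugates of `x` are real and
very close to the `b i`, and a nonzero algebraic integer does not have norm less than `1`.

Only `b d` varies, along a sequence growing like `k ^ ℓ`, so the discriminant is
`O(k ^ (2 * d * ℓ))`. For two of the fields with parameters in `[R, 2 * R)`, corresponding
conjugates of the generators differ by `O(R ^ (-ℓ))`, except the last ones, which differ by
`O(R ^ ℓ)`. An isomorphism permutes the real embeddings; if two of the fields are isomorphic to a
third through the same permutation, the difference of their generators has norm less than `1`, so
the two parameters coincide. Hence each isomorphism class occurs at most `n!` times.
-/

open NumberField Polynomial Filter Finset Topology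

section PowersUpToSign

variable {R S ι : Type*} [CommRing R] [CommRing S] {p : ℕ} {y : R}

/-- `y` equals `± z ^ p` for some `z`. Signs are the only roots of unity in a real field. -/
def IsPowUpToSign (p : ℕ) (y : R) : Prop :=
  ∃ z : R, y = z ^ p ∨ y = -z ^ p

/-- The family `α` is independent modulo `p`-th powers up to sign. Exponents are normalised to lie
in `[0, p)`, so that the notion makes sense for non-invertible `α i`. -/
def IsIndepModPow [Fintype ι] (p : ℕ) (α : ι → R) : Prop :=
  ∀ e : ι → ℕ, (∀ i, e i < p) → IsPowUpToSign p (∏ i, α i ^ e i) → ∀ i, e i = 0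

namespace IsPowUpToSign

theorem map (hy : IsPowUpToSign p y) (f : R →+* S) : IsPowUpToSign p (f y) := by
  obtain ⟨z, rfl | rfl⟩ := hy
  · exact ⟨f z, .inl (map_pow f z p)⟩
  · exact ⟨f z, .inr (by rw [map_neg, map_pow])⟩

theorem pow_mul (hy : IsPowUpToSign p y) (z : R) : IsPowUpToSign p (z ^ p * y) := by
  obtain ⟨w, rfl | rfl⟩ := hy
  · exact ⟨z * w, .inl (mul_pow z w p).symm⟩
  · exact ⟨z * w, .inr (by rw [mul_pow, mul_neg])⟩

theorem pow (hy : IsPowUpToSign p y) (n : ℕ) : IsPowUpToSign p (y ^ n) := by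
  obtain ⟨z, rfl | rfl⟩ := hy
  · exact ⟨z ^ n, .inl (pow_right_comm z p n)⟩
  · refine ⟨z ^ n, (neg_one_pow_eq_or R n).imp (fun h ↦ ?_) (fun h ↦ ?_)⟩ <;>
      rw [neg_pow, h, pow_right_comm] <;> ring

/-- Since `n` is invertible modulo `p`, some power `(y ^ n) ^ r` equals `y * (y ^ s) ^ p`; the
factor `(y ^ s) ^ p` can be cancelled because the base ring is integrally closed. -/
theorem of_pow [IsDomain R] [IsIntegrallyClosed R] {n : ℕ} (hp : p.Prime) (hn : p.Coprime n)
    (hy : IsPowUpToSign p (y ^ n)) : IsPowUpToSign p y := by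
  rcases eq_or_ne y 0 with rfl | hy0
  · exact ⟨0, .inl (zero_pow hp.ne_zero).symm⟩
  obtain ⟨r, -, hr⟩ := Nat.exists_mul_mod_eq_one_of_coprime hn.symm hp.one_lt
  set s := n * r / p
  have hrs : (y ^ n) ^ r = (y ^ s) ^ p * y := by
    rw [← _root_.pow_mul, ← _root_.pow_mul, ← pow_succ, ← hr, mul_comm s p, Nat.div_add_mod]
  have cancel {a b : R} (hab : (y ^ s) ^ p * b = a ^ p) : ∃ z, b = z ^ p := by
    obtain ⟨z, rfl⟩ := (IsIntegrallyClosed.pow_dvd_pow_iff hp.ne_zero).1 (Dvd.intro _ hab)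
    exact ⟨z, mul_left_cancel₀ (pow_ne_zero p (pow_ne_zero s hy0)) (by rw [hab, mul_pow])⟩
  obtain ⟨z, hz | hz⟩ := hrs ▸ hy.pow r
  · exact (cancel hz).imp fun _ ↦ .inl
  · exact (cancel ((mul_neg _ y).trans (neg_eq_iff_eq_neg.2 hz))).imp
      fun _ h ↦ .inr (neg_eq_iff_eq_neg.1 h)

theorem exists_nonneg (hy : IsPowUpToSign p y) (φ : R →+* ℝ) :
    ∃ z : R, 0 ≤ φ z ∧ (y = z ^ p ∨ y = -z ^ p) := by
  obtain ⟨z, hz⟩ := hy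
  rcases le_total 0 (φ z) with h | h
  · exact ⟨z, h, hz⟩
  · refine ⟨-z, by rwa [map_neg, neg_nonneg], ?_⟩
    rcases p.even_or_odd with hp | hp
    · rwa [hp.neg_pow]
    · rwa [hp.neg_pow, neg_neg, or_comm]

end IsPowUpToSign

theorem isIndepModPow_of_forall_eq [IsDomain R] [IsIntegrallyClosed R] [Fintype ι] (hp : p.Prime)
    {α : ι → R} {i₀ : ι}
    (heq : ∀ e : ι → ℕ, (∀ i, e i < p) → IsPowUpToSign p (∏ i, α i ^ e i) → ∀ i, e i = e i₀)
    (hnot : ¬ IsPowUpToSign p (∏ i, α i)) : IsIndepModPow p α := by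
  intro e he hpow i
  by_contra hi
  simp only [heq e he hpow, prod_pow] at hpow hi
  exact hnot (hpow.of_pow hp (Nat.coprime_of_lt_prime hi (he i₀) hp))

end PowersUpToSign

section ClassGroup

/-- The exponent of the `ℓ`-torsion subgroup divides `ℓ`, is attained, and divides no proper
`ℓ / p`. -/
theorem exists_orderOf_eq_of_forall_prime {G : Type*} [CommGroup G] {ℓ : ℕ} (hℓ : ℓ ≠ 0)
    (h : ∀ p : ℕ, p.Prime → p ∣ ℓ → ∃ c : G, c ^ ℓ = 1 ∧ c ^ (ℓ / p) ≠ 1) :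
    ∃ c : G, orderOf c = ℓ := by
  set H : Subgroup G := (powMonoidHom ℓ : G →* G).ker
  have pow_eq_one (g : H) : g ^ ℓ = 1 := Subtype.ext g.2
  obtain ⟨g, hg⟩ := Monoid.exists_orderOf_eq_exponent
    (⟨ℓ, hℓ.pos, pow_eq_one⟩ : Monoid.ExponentExists H)
  obtain ⟨k, hk⟩ := Monoid.exponent_dvd_of_forall_pow_eq_one pow_eq_one
  refine ⟨g, ?_⟩
  rw [Subgroup.orderOf_coe, hg]
  by_contra hne
  have hk1 : k ≠ 1 := by rintro rfl; exact hne (by rw [hk, mul_one])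
  obtain ⟨p, hp, k', rfl⟩ := Nat.exists_prime_and_dvd hk1
  have hℓp : ℓ = p * (Monoid.exponent H * k') := hk.trans (mul_left_comm _ _ _)
  obtain ⟨c, hc, hc'⟩ := h p hp ⟨_, hℓp⟩
  refine hc' ?_
  rw [Nat.div_eq_of_eq_mul_right hp.pos hℓp, pow_mul, Subgroup.pow_exponent_eq_one (H := H) hc,
    one_pow]

variable {ι κ : Type*} [Fintype ι] [Fintype κ]

theorem exists_forall_prime_dvd_sum_mul {p : ℕ} (hp : p.Prime)
    (hcard : Fintype.card κ < Fintype.card ι) (a : ι → κ → ℤ) :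
    ∃ e : ι → ℕ, (∀ i, e i < p) ∧ e ≠ 0 ∧ ∀ j, (p : ℤ) ∣ ∑ i, a i j * e i := by
  have := Fact.mk hp
  obtain ⟨x, hx, hx0⟩ := (Submodule.ne_bot_iff _).1 (LinearMap.ker_ne_bot_of_finrank_lt
    (f := Matrix.mulVecLin (Matrix.of fun (j : κ) (i : ι) ↦ (a i j : ZMod p))) (by simpa))
  refine ⟨fun i ↦ (x i).val, fun i ↦ ZMod.val_lt _, fun h ↦ hx0 ?_, fun j ↦ ?_⟩
  · exact funext fun i ↦ (ZMod.val_eq_zero _).1 (congrFun h i)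
  · rw [← ZMod.intCast_zmod_eq_zero_iff_dvd]
    simpa [Matrix.mulVec, dotProduct] using congrFun (LinearMap.mem_ker.1 hx) j

variable {K : Type*} [Field K] [NumberField K]

theorem unitsRank_lt_finrank : Units.rank K < Module.finrank ℚ K := by
  have hcard := InfinitePlace.card_eq_nrRealPlaces_add_nrComplexPlaces K
  have hrank := InfinitePlace.card_add_two_mul_card_eq_rank K
  have hpos : 0 < Fintype.card (InfinitePlace K) := Fintype.card_pos
  rw [Units.rank]
  lia

theorem eq_one_or_neg_one_of_mem_torsion (φ : K →+* ℝ) {ζ : (𝓞 K)ˣ} (hζ : ζ ∈ Units.torsion K) :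
    ζ = 1 ∨ ζ = -1 := by
  have habs : |φ ζ| = |1| := by
    simpa using (Units.mem_torsion K).1 hζ (InfinitePlace.mk (Complex.ofRealHom.comp φ))
  refine (abs_eq_abs.1 habs).imp (fun h ↦ ?_) (fun h ↦ ?_) <;>
    exact Units.coe_injective K (φ.injective (by simpa using h))

theorem not_isIndepModPow_units (φ : K →+* ℝ) {p : ℕ} (hp : p.Prime)
    (hrank : Units.rank K < Fintype.card ι) (v : ι → (𝓞 K)ˣ) :
    ¬ IsIndepModPow p (fun i ↦ (v i : 𝓞 K)) := by
  choose ζa hv _ using fun i ↦ Units.exist_unique_eq_mul_prod K (v i)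
  obtain ⟨e, he, he0, hdvd⟩ :=
    exists_forall_prime_dvd_sum_mul hp (by simpa using hrank) (fun i ↦ (ζa i).2)
  choose f hf using hdvd
  set ζ : (𝓞 K)ˣ := ∏ i, ((ζa i).1 : (𝓞 K)ˣ) ^ e i
  set γ : (𝓞 K)ˣ := ∏ j, Units.fundSystem K j ^ f j
  have hprod : ∏ i, v i ^ e i = ζ * γ ^ p := by
    have hpow (i) : v i ^ e i = ((ζa i).1 : (𝓞 K)ˣ) ^ e i *
        ∏ j, Units.fundSystem K j ^ ((ζa i).2 j * e i) := by
      conv_lhs => rw [hv i]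
      simp only [mul_pow, ← Finset.prod_pow, zpow_mul, zpow_natCast]
    have hcol (j) : ∏ i, Units.fundSystem K j ^ ((ζa i).2 j * e i) =
        (Units.fundSystem K j ^ f j) ^ p := by
      rw [← zpow_natCast, ← zpow_mul, mul_comm, ← hf j]
      exact (map_sum (zpowersHom _ (Units.fundSystem K j)).toAdditive _ _).symm
    simp only [hpow, Finset.prod_mul_distrib, ζ, γ, ← Finset.prod_pow]
    rw [Finset.prod_comm]
    simp only [hcol]
  have hζ : ζ ∈ Units.torsion K := prod_mem fun i _ ↦ pow_mem (ζa i).1.2 _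
  intro hind
  refine he0 (funext (hind e he ⟨γ, ?_⟩))
  refine (eq_one_or_neg_one_of_mem_torsion φ hζ).imp (fun h ↦ ?_) (fun h ↦ ?_) <;>
    simpa [h] using congrArg (fun y : (𝓞 K)ˣ ↦ (y : 𝓞 K)) hprod

theorem exists_orderOf_classGroup_eq (φ : K →+* ℝ) {ℓ : ℕ} (hℓ : ℓ ≠ 0)
    (hrank : Units.rank K < Fintype.card ι) {α : ι → 𝓞 K} (hα : ∀ i, α i ≠ 0)
    (hspan : ∀ i, ∃ I : Ideal (𝓞 K), Ideal.span {α i} = I ^ ℓ)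
    (hind : ∀ p : ℕ, p.Prime → p ∣ ℓ → IsIndepModPow p α) :
    ∃ c : ClassGroup (𝓞 K), orderOf c = ℓ := by
  choose I hI using hspan
  have hI0 (i) : I i ∈ nonZeroDivisors (Ideal (𝓞 K)) := by
    refine mem_nonZeroDivisors_of_ne_zero fun h ↦ hα i ?_
    simpa [h, hℓ] using hI i
  refine exists_orderOf_eq_of_forall_prime hℓ fun p hp hpℓ ↦ ?_
  by_contra! hcon
  have hprincipal (i) : (I i ^ (ℓ / p)).IsPrincipal := by
    have hone : ClassGroup.mk0 (⟨I i, hI0 i⟩ ^ ℓ) = 1 :=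
      (ClassGroup.mk0_eq_one_iff (pow_mem (hI0 i) ℓ)).2 ⟨α i, (hI i).symm⟩
    have := hcon (ClassGroup.mk0 ⟨I i, hI0 i⟩) ((map_pow _ _ _).symm.trans hone)
    exact (ClassGroup.mk0_eq_one_iff (pow_mem (hI0 i) _)).1 ((map_pow _ _ _).trans this)
  choose β hβ using fun i ↦ (hprincipal i).principal
  have hassoc (i) : Associated (β i ^ p) (α i) := by
    rw [← Ideal.span_singleton_eq_span_singleton, ← Ideal.span_singleton_pow, Ideal.span, ← hβ i,
      ← pow_mul, Nat.div_mul_cancel hpℓ, hI i]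
  choose v hv using hassoc
  refine not_isIndepModPow_units φ hp hrank v fun e he hpow ↦ hind p hp hpℓ e he ?_
  convert hpow.pow_mul (∏ i, β i ^ e i) using 1
  rw [← Finset.prod_pow, ← Finset.prod_mul_distrib]
  exact Finset.prod_congr rfl fun i _ ↦ by rw [← hv i, mul_pow, pow_right_comm]

end ClassGroup

section IdealPowers

variable {R ι : Type*} [CommRing R]

theorem sub_dvd_prod_sub_sub_prod_sub (s : Finset ι) (x y : R) (b : ι → R) :
    x - y ∣ ∏ j ∈ s, (x - b j) - ∏ j ∈ s, (y - b j) := by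
  have hdvd := sub_dvd_eval_sub x y (∏ j ∈ s, (X - C (b j)))
  simp only [eval_prod, eval_sub, eval_X, eval_C] at hdvd
  exact hdvd

theorem span_singleton_eq_pow_of_isCoprime [IsDedekindDomain R] {ℓ : ℕ} {a b c : R}
    (hab : IsCoprime a b) (hc : a * b = c ^ ℓ) : ∃ I : Ideal R, Ideal.span {a} = I ^ ℓ := by
  let _ : GCDMonoid (Ideal R) := UniqueFactorizationMonoid.toGCDMonoid _
  refine exists_eq_pow_of_mul_eq_pow_of_coprime (c := Ideal.span {c})
    ((Ideal.isCoprime_span_singleton_iff a b).2 hab) ?_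
  rw [Ideal.span_singleton_mul_span_singleton, hc, Ideal.span_singleton_pow]

/-- The cofactor of `x - b i` in `u * b i + 1` is `∏ j ≠ i, (x - b j) - u`, which modulo
`x - b i` is the integer `∏ j ≠ i, (b i - b j) - u`. -/
theorem span_sub_intCast_eq_pow [IsDedekindDomain R] [DecidableEq ι] [Fintype ι] {ℓ : ℕ} {x : R}
    {u : ℤ} {b : ι → ℤ} (hx : ∏ i, (x - b i) = u * x + 1) {i : ι} {t : ℤ} (ht : u * b i + 1 = t ^ ℓ)
    (hcop : IsCoprime t (∏ j ∈ univ.erase i, (b i - b j) - u)) :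
    ∃ I : Ideal R, Ideal.span {x - (b i : R)} = I ^ ℓ := by
  set P : R := ∏ j ∈ univ.erase i, (x - b j)
  have hmul : (x - b i) * (P - u) = (t : R) ^ ℓ := by
    have hP : (x - b i) * P = u * x + 1 := by
      rw [← hx, mul_prod_erase univ (fun j ↦ x - (b j : R)) (mem_univ i)]
    have ht' : (u * b i + 1 : R) = (t : R) ^ ℓ := mod_cast congrArg (Int.cast (R := R)) ht
    linear_combination hP + ht'
  refine span_singleton_eq_pow_of_isCoprime ?_ hmul
  obtain ⟨k, hk⟩ := sub_dvd_prod_sub_sub_prod_sub (univ.erase i) x (b i) (fun j ↦ (b j : R))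
  have hcop' : IsCoprime ((t : R) ^ ℓ) (∏ j ∈ univ.erase i, ((b i : R) - b j) - u) := by
    simpa using (hcop.map (Int.castRingHom R)).pow_left
  rw [show P - u = ∏ j ∈ univ.erase i, ((b i : R) - b j) - u + (x - b i) * k by
    linear_combination hk]
  exact (hcop'.of_isCoprime_of_dvd_left (Dvd.intro _ hmul)).add_mul_left_right k

end IdealPowers

section Homs

variable {K : Type*} [Field K] {f : ℤ[X]}

theorem minpoly_rat_eq_map [CharZero K] (hmonic : f.Monic) (hirr : Irreducible f) {x : K}
    (hx : aeval x f = 0) : minpoly ℚ x = f.map (algebraMap ℤ ℚ) :=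
  (minpoly.eq_of_irreducible_of_monic
    ((hmonic.irreducible_iff_irreducible_map_fraction_map (K := ℚ)).1 hirr)
    (by rw [aeval_map_algebraMap, hx]) (hmonic.map _)).symm

theorem exists_ringHom_padicInt {q : ℕ} [Fact q.Prime] (φ : K →+* ℚ_[q]) :
    ∃ Θ : 𝓞 K →+* ℤ_[q], ∀ y : 𝓞 K, (Θ y : ℚ_[q]) = φ y := by
  have hint (y : 𝓞 K) : φ y ∈ PadicInt.subring q := by
    have hy : IsIntegral ℤ_[q] (φ y) :=
      ((RingOfIntegers.isIntegral_coe y).map φ.toIntAlgHom).tower_top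
    obtain ⟨c, hc⟩ := IsIntegrallyClosed.isIntegral_iff.1 hy
    exact hc ▸ c.2
  exact ⟨(φ.comp (algebraMap (𝓞 K) K)).codRestrict (PadicInt.subring q) hint, fun _ ↦ rfl⟩

theorem exists_padicInt_root {q : ℕ} [Fact q.Prime] {a : ℤ}
    (hroot : ((f.eval a : ℤ) : ZMod q) = 0) (hsimple : ((f.derivative.eval a : ℤ) : ZMod q) ≠ 0) :
    ∃ z : ℤ_[q], aeval z f = 0 ∧ PadicInt.toZMod z = a := by
  have haeval (g : ℤ[X]) : aeval (a : ℤ_[q]) g = ((g.eval a : ℤ) : ℤ_[q]) := by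
    simpa using aeval_algebraMap_apply ℤ_[q] a g
  rw [ZMod.intCast_zmod_eq_zero_iff_dvd] at hroot
  rw [Ne, ZMod.intCast_zmod_eq_zero_iff_dvd, ← PadicInt.norm_int_lt_one_iff_dvd,
    ← haeval] at hsimple
  have hderiv : ‖aeval (a : ℤ_[q]) f.derivative‖ = 1 :=
    le_antisymm (PadicInt.norm_le_one _) (not_lt.1 hsimple)
  obtain ⟨z, hz, hza, -⟩ := hensels_lemma (p := q) (F := f) (a := a) (by
    rwa [hderiv, one_pow, haeval, PadicInt.norm_int_lt_one_iff_dvd])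
  refine ⟨z, hz, ?_⟩
  rw [hderiv, PadicInt.norm_lt_one_iff_dvd, ← Ideal.mem_span_singleton,
    ← PadicInt.maximalIdeal_eq_span_p, ← PadicInt.ker_toZMod, RingHom.mem_ker, map_sub,
    map_intCast, sub_eq_zero] at hza
  exact hza

variable [NumberField K]

theorem exists_ringHom_apply_eq_of_irreducible (hmonic : f.Monic) (hirr : Irreducible f) {x : K}
    (hx : aeval x f = 0) (hdeg : f.natDegree = Module.finrank ℚ K) {L : Type*} [Field L]
    [CharZero L] {z : L} (hz : aeval z f = 0) : ∃ φ : K →+* L, φ x = z := by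
  have hmin := minpoly_rat_eq_map hmonic hirr hx
  have htop : IntermediateField.adjoin ℚ {x} = ⊤ := by
    rw [Field.primitive_element_iff_minpoly_natDegree_eq, hmin, hmonic.natDegree_map, hdeg]
  let B := PowerBasis.ofAdjoinEqTop (Algebra.IsIntegral.isIntegral (R := ℚ) x)
    (IntermediateField.adjoin_eq_top_iff.1 htop)
  have hgen : B.gen = x := PowerBasis.ofAdjoinEqTop_gen _ _
  have hzmin : aeval z (minpoly ℚ B.gen) = 0 := by rw [hgen, hmin, aeval_map_algebraMap, hz]
  exact ⟨B.lift z hzmin, (congrArg _ hgen.symm).trans (B.lift_gen z hzmin)⟩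

theorem exists_ringHom_zmod (hmonic : f.Monic) (hirr : Irreducible f) {x : 𝓞 K}
    (hx : aeval x f = 0) (hdeg : f.natDegree = Module.finrank ℚ K) {q : ℕ} [Fact q.Prime] {a : ℤ}
    (hroot : ((f.eval a : ℤ) : ZMod q) = 0) (hsimple : ((f.derivative.eval a : ℤ) : ZMod q) ≠ 0) :
    ∃ Ψ : 𝓞 K →+* ZMod q, Ψ x = a := by
  obtain ⟨z, hz, hza⟩ := exists_padicInt_root hroot hsimple
  have hxK : aeval (x : K) f = 0 := by rw [aeval_algebraMap_apply, hx, map_zero]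
  have hzQ : aeval (z : ℚ_[q]) f = 0 := by
    have := aeval_algebraMap_apply ℚ_[q] z f
    rwa [hz, map_zero] at this
  obtain ⟨φ, hφ⟩ := exists_ringHom_apply_eq_of_irreducible hmonic hirr hxK hdeg hzQ
  obtain ⟨Θ, hΘ⟩ := exists_ringHom_padicInt φ
  refine ⟨PadicInt.toZMod.comp Θ, ?_⟩
  rw [RingHom.comp_apply, PadicInt.ext ((hΘ x).trans hφ), hza]

end Homs

section Residues

variable {q ℓ d : ℕ} [Fact q.Prime]

/-- A residue `g` modulo `q` such that `g ^ e * g⁻¹ ^ e'` is `±` a `p`-th power only if `e = e'`,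
for all primes `p ∣ ℓ` and exponents below `p`. The other condition says that `0` is a simple root
modulo `q` of the polynomial `∏ i, (X + c i) - 1` with `c = residuePattern g j`. -/
structure IsSeparatingResidue (ℓ d : ℕ) (g : (ZMod q)ˣ) : Prop where
  add_inv_add_ne_zero : (g + (g⁻¹ : (ZMod q)ˣ) + (d - 1) : ZMod q) ≠ 0
  eq_of_isPowUpToSign : ∀ p : ℕ, p.Prime → p ∣ ℓ → ∀ e e' : ℕ, e < p → e' < p →
    IsPowUpToSign p ((g ^ e * g⁻¹ ^ e' : (ZMod q)ˣ) : ZMod q) → e = e'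

theorem IsPowUpToSign.pow_eq_one_of_zmod {p k : ℕ} (hp : p ≠ 0) (hq : q - 1 = p * k)
    (hk : Even k) {y : (ZMod q)ˣ} (hy : IsPowUpToSign p (y : ZMod q)) : y ^ k = 1 := by
  obtain ⟨z, hz⟩ := hy
  have hz0 : z ≠ 0 := by
    rintro rfl
    simp [hp] at hz
  have hpow : (y : ZMod q) ^ k = (z ^ p) ^ k := by
    rcases hz with hz | hz <;> rw [hz]
    exact hk.neg_pow _
  ext
  rw [Units.val_pow_eq_pow_val, hpow, ← _root_.pow_mul, ← hq, ZMod.pow_card_sub_one_eq_one hz0,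
    Units.val_one]

theorem eq_of_isPowUpToSign_of_generator {g : (ZMod q)ˣ} (hg : orderOf g = q - 1)
    (hq : 2 * ℓ ∣ q - 1) {a p : ℕ} (hp : p.Prime) (hpℓ : p ∣ ℓ) (ha : p.Coprime a) {e e' : ℕ}
    (he : e < p) (he' : e' < p)
    (hpow : IsPowUpToSign p (((g ^ a) ^ e * (g ^ a)⁻¹ ^ e' : (ZMod q)ˣ) : ZMod q)) : e = e' := by
  obtain ⟨k, hk⟩ : p * 2 ∣ q - 1 := (mul_comm p 2 ▸ Nat.mul_dvd_mul_left 2 hpℓ).trans hq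
  rw [mul_assoc] at hk
  have hk0 : 2 * k ≠ 0 := by
    rintro h0
    have := (Fact.out : q.Prime).two_le
    simp only [h0, mul_zero] at hk
    lia
  have hone := hpow.pow_eq_one_of_zmod hp.ne_zero hk (even_two_mul k)
  have hone' : g ^ ((a * (e - e')) * (2 * k : ℕ) : ℤ) = 1 := by
    rw [← hone, zpow_mul, zpow_mul, zpow_sub, zpow_natCast, zpow_natCast, zpow_natCast,
      zpow_natCast, inv_pow]
  have hdvd : (p : ℤ) ∣ a * (e - e') := by
    rw [← orderOf_dvd_iff_zpow_eq_one, hg, hk, Nat.cast_mul] at hone'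
    exact (mul_dvd_mul_iff_right (mod_cast hk0)).1 hone'
  have hdvd' : (p : ℤ) ∣ e - e' := (Nat.isCoprime_iff_coprime.2 ha).dvd_of_dvd_mul_left hdvd
  have := Int.eq_zero_of_abs_lt_dvd hdvd' (by grind)
  lia

/-- Two units with the same trace `g + g⁻¹` are equal or inverse, so at most one of `g` and
`g ^ (ℓ + 1)` violates the trace condition when `g` is a primitive root. -/
theorem exists_isSeparatingResidue (hℓ : ℓ ≠ 0) (hq : 2 * ℓ ∣ q - 1) (hℓq : ℓ + 3 < q) (d : ℕ) :
    ∃ g : (ZMod q)ˣ, IsSeparatingResidue ℓ d g := by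
  obtain ⟨g, hg⟩ := IsCyclic.exists_generator (α := (ZMod q)ˣ)
  have horder : orderOf g = q - 1 := by
    rw [orderOf_eq_card_of_forall_mem_zpowers hg, Nat.card_eq_fintype_card, ZMod.card_units]
  have hsep (a : ℕ) (ha : ∀ p : ℕ, p.Prime → p ∣ ℓ → p.Coprime a)
      (hne : ((g ^ a : (ZMod q)ˣ) + ((g ^ a)⁻¹ : (ZMod q)ˣ) + (d - 1) : ZMod q) ≠ 0) :
      ∃ g : (ZMod q)ˣ, IsSeparatingResidue ℓ d g :=
    ⟨g ^ a, hne, fun p hp hpℓ e e' he he' ↦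
      eq_of_isPowUpToSign_of_generator horder hq hp hpℓ (ha p hp hpℓ) he he'⟩
  by_contra hnone
  have hg1 := not_not.1 (mt (hsep 1 fun p _ _ ↦ p.coprime_one_right) hnone)
  have hg2 := not_not.1 (mt (hsep (ℓ + 1) fun p _ hpℓ ↦ by
    obtain ⟨c, rfl⟩ := hpℓ; simp) hnone)
  set h := g ^ (ℓ + 1) with hh
  rw [pow_one] at hg1
  have hmul : ((g : ZMod q) - h) * (g * h - 1) = 0 := by
    have hgi := Units.mul_inv g
    have hhi := Units.mul_inv h
    linear_combination g * h * (hg1 - hg2) - h * hgi + g * hhi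
  have pow_ne (k : ℕ) (hk0 : k ≠ 0) (hk : k < q - 1) : g ^ k ≠ 1 :=
    pow_ne_one_of_lt_orderOf hk0 (horder ▸ hk)
  rcases mul_eq_zero.1 hmul with heq | heq
  · refine pow_ne ℓ hℓ (by lia) (mul_left_cancel (a := g) ?_)
    rw [mul_one, ← pow_succ', ← hh]
    exact (Units.ext (sub_eq_zero.1 heq)).symm
  · refine pow_ne (ℓ + 2) (by lia) (by lia) ?_
    rw [pow_succ', ← hh]
    exact Units.ext (sub_eq_zero.1 heq)

/-- The residues prescribed for `-b` at the prime attached to `j`: `g` at `0`, `g⁻¹` at `j + 1`, and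
`1` elsewhere. -/
def residuePattern (g : (ZMod q)ˣ) (j : Fin d) : Fin (d + 1) → (ZMod q)ˣ :=
  Fin.cons g (Pi.mulSingle j g⁻¹)

theorem prod_residuePattern_pow (g : (ZMod q)ˣ) (j : Fin d) (e : Fin (d + 1) → ℕ) :
    ∏ i, residuePattern g j i ^ e i = g ^ e 0 * g⁻¹ ^ e j.succ := by
  simp only [residuePattern, Fin.prod_univ_succ, Fin.cons_zero, Fin.cons_succ]
  rw [prod_eq_single j (fun i _ hi ↦ by rw [Pi.mulSingle_eq_of_ne hi, one_pow]) (by simp),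
    Pi.mulSingle_eq_same]

theorem sum_inv_residuePattern (g : (ZMod q)ˣ) (j : Fin d) :
    ∑ i, (((residuePattern g j i)⁻¹ : (ZMod q)ˣ) : ZMod q) = g + (g⁻¹ : (ZMod q)ˣ) + (d - 1) := by
  have hd : 1 ≤ d := Nat.one_le_of_lt j.2
  simp only [residuePattern, Fin.sum_univ_succ, Fin.cons_zero, Fin.cons_succ]
  rw [← add_sum_erase _ _ (mem_univ j), Pi.mulSingle_eq_same, inv_inv,
    sum_congr rfl (g := fun _ ↦ (1 : ZMod q)) fun i hi ↦ by
      rw [Pi.mulSingle_eq_of_ne (ne_of_mem_erase hi), inv_one, Units.val_one]]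
  simp only [sum_const, card_erase_of_mem (mem_univ j), card_univ, Fintype.card_fin, nsmul_eq_mul,
    mul_one, Nat.cast_sub hd, Nat.cast_one]
  ring

theorem isIndepModPow_sub_intCast {R : Type*} [CommRing R] [IsDomain R] [IsIntegrallyClosed R]
    {x : R} {b : Fin (d + 1) → ℤ} {p : ℕ} (hp : p.Prime) (hpℓ : p ∣ ℓ)
    (hres : ∀ j : Fin d, ∃ (q : ℕ) (_ : Fact q.Prime) (g : (ZMod q)ˣ) (Ψ : R →+* ZMod q),
      IsSeparatingResidue ℓ d g ∧ Ψ x = 0 ∧ ∀ i, (-b i : ZMod q) = residuePattern g j i)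
    (hnot : ¬ IsPowUpToSign p (∏ i, (x - b i))) : IsIndepModPow p fun i ↦ x - (b i : R) := by
  refine isIndepModPow_of_forall_eq hp (i₀ := 0) (fun e he hpow ↦ ?_) hnot
  refine Fin.cases rfl fun j ↦ ?_
  obtain ⟨q, _, g, Ψ, hg, hΨ, hb⟩ := hres j
  refine (hg.eq_of_isPowUpToSign p hp hpℓ _ _ (he 0) (he _) ?_).symm
  convert hpow.map Ψ using 1
  simp only [← prod_residuePattern_pow, map_prod, map_pow, map_sub, hΨ, map_intCast, zero_sub, hb,
    Units.coe_prod, Units.val_pow_eq_pow_val]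

end Residues

section ShiftedProduct

variable {ι : Type*} [Fintype ι] {u : ℤ} {b : ι → ℤ}

/-- The polynomial `∏ i, (X - b i) - (u X + 1)`, whose roots generate the fields to be counted. -/
noncomputable def shiftedProd (u : ℤ) (b : ι → ℤ) : ℤ[X] :=
  ∏ i, (X - C (b i)) - (C u * X + 1)

theorem aeval_shiftedProd {R : Type*} [CommRing R] (u : ℤ) (b : ι → ℤ) (x : R) :
    aeval x (shiftedProd u b) = ∏ i, (x - b i) - (u * x + 1) := by
  simp [shiftedProd]

theorem eval_zero_shiftedProd_zmod {q : ℕ} {c : ι → (ZMod q)ˣ}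
    (hc : ∀ i, (-b i : ZMod q) = c i) (hprod : ∏ i, c i = 1) :
    (((shiftedProd u b).eval 0 : ℤ) : ZMod q) = 0 := by
  simp [shiftedProd, eval_prod, hc, ← Units.coe_prod, hprod]

theorem eval_zero_derivative_shiftedProd_zmod {q : ℕ} (hu : (u : ZMod q) = 0) {c : ι → (ZMod q)ˣ}
    (hc : ∀ i, (-b i : ZMod q) = c i) (hprod : ∏ i, c i = 1) :
    (((shiftedProd u b).derivative.eval 0 : ℤ) : ZMod q) =
      ∑ i, (((c i)⁻¹ : (ZMod q)ˣ) : ZMod q) := by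
  classical
  have hinv (i) : ∏ k ∈ univ.erase i, c k = (c i)⁻¹ := by
    rw [eq_inv_iff_mul_eq_one, prod_erase_mul _ _ (mem_univ i), hprod]
  simp [shiftedProd, derivative_prod_finset, eval_finsetSum, eval_prod, hc, hu, ← Units.coe_prod,
    hinv]

end ShiftedProduct

section RealEmbeddings

variable {K ι : Type*} [Field K] [NumberField K] [Fintype ι] {σ : ι → K →+* ℝ}

theorem bijective_ofRealHom_comp (hcard : Module.finrank ℚ K = Fintype.card ι)
    (hσ : Function.Injective σ) :
    Function.Bijective fun i ↦ (Complex.ofRealHom.comp (σ i)).toRatAlgHom := by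
  rw [Fintype.bijective_iff_injective_and_card, AlgHom.card, hcard]
  refine ⟨fun i j hij ↦ hσ (RingHom.ext fun z ↦ Complex.ofReal_injective ?_), rfl⟩
  exact DFunLike.congr_fun hij z

theorem bijective_of_injective_realEmbeddings (hcard : Module.finrank ℚ K = Fintype.card ι)
    (hσ : Function.Injective σ) : Function.Bijective σ := by
  refine ⟨hσ, fun φ ↦ ?_⟩
  obtain ⟨i, hi⟩ := (bijective_ofRealHom_comp hcard hσ).2 (Complex.ofRealHom.comp φ).toRatAlgHom
  exact ⟨i, RingHom.ext fun z ↦ Complex.ofReal_injective (DFunLike.congr_fun hi z)⟩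

theorem one_le_prod_abs_realEmbeddings (hcard : Module.finrank ℚ K = Fintype.card ι)
    (hσ : Function.Injective σ) {z : 𝓞 K} (hz : z ≠ 0) : 1 ≤ ∏ i, |σ i z| := by
  have hnorm : ((Algebra.norm ℤ z : ℤ) : ℝ) = ∏ i, σ i z := by
    apply Complex.ofReal_injective
    have hprod := Algebra.norm_eq_prod_embeddings ℚ ℂ (z : K)
    rw [← (Equiv.ofBijective _ (bijective_ofRealHom_comp hcard hσ)).prod_comp,
      ← Algebra.coe_norm_int] at hprod
    simpa using hprod
  rw [← abs_prod, ← hnorm]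
  exact_mod_cast Int.one_le_abs (Algebra.norm_ne_zero_iff.2 hz)

theorem discr_ringOfIntegers_rat {n : ℕ} (v : Fin n → 𝓞 K) :
    ((Algebra.discr ℤ v : ℤ) : ℚ) = Algebra.discr ℚ fun i ↦ (v i : K) := by
  rw [Algebra.discr_def, Algebra.discr_def, ← eq_intCast (algebraMap ℤ ℚ), RingHom.map_det]
  congr 1
  ext i j
  simp only [RingHom.mapMatrix_apply, Matrix.map_apply, Algebra.traceMatrix_apply,
    Algebra.traceForm_apply, ← map_mul]
  exact Algebra.coe_trace_int (v i * v j)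

theorem exists_discr_eq_sq_mul {n : ℕ} (hcard : Module.finrank ℚ K = n) (v : Fin n → 𝓞 K) :
    ∃ m : ℤ, Algebra.discr ℤ v = m ^ 2 * discr K := by
  let B := (RingOfIntegers.basis K).reindex (Fintype.equivFinOfCardEq (n := n) (by
    rw [← Module.finrank_eq_card_basis (RingOfIntegers.basis K), RingOfIntegers.rank, hcard]))
  refine ⟨(B.toMatrix v).det, ?_⟩
  rw [← discr_eq_discr K B, ← Algebra.discr_of_matrix_vecMul, Module.Basis.toMatrix_map_vecMul]

theorem discr_powers_eq_prod_sq {n : ℕ} {σ : Fin n → K →+* ℝ} (hcard : Module.finrank ℚ K = n)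
    (hσ : Function.Injective σ) (x : 𝓞 K) :
    ((Algebra.discr ℤ fun i : Fin n ↦ x ^ (i : ℕ) : ℤ) : ℝ) =
      (∏ i, ∏ j ∈ Ioi i, (σ j x - σ i x)) ^ 2 := by
  let e := Equiv.ofBijective _ (bijective_ofRealHom_comp (by simpa using hcard) hσ)
  have hmatrix : Algebra.embeddingsMatrixReindex ℚ ℂ (fun i : Fin n ↦ ((x ^ (i : ℕ) : 𝓞 K) : K)) e =
      (Matrix.vandermonde fun i ↦ ((σ i x : ℝ) : ℂ)).transpose := by
    ext i j
    simp [Algebra.embeddingsMatrixReindex, Algebra.embeddingsMatrix, Matrix.vandermonde, e]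
  have hdiscr := Algebra.discr_eq_det_embeddingsMatrixReindex_pow_two ℚ ℂ
    (fun i : Fin n ↦ ((x ^ (i : ℕ) : 𝓞 K) : K)) e
  rw [← discr_ringOfIntegers_rat, hmatrix, Matrix.det_transpose, Matrix.det_vandermonde] at hdiscr
  apply Complex.ofReal_injective
  simpa using hdiscr

theorem abs_discr_le_prod_sq {n : ℕ} {σ : Fin n → K →+* ℝ} (hcard : Module.finrank ℚ K = n)
    {x : 𝓞 K} (hx : Function.Injective fun i ↦ σ i x) :
    |(discr K : ℝ)| ≤ (∏ i, ∏ j ∈ Ioi i, |σ j x - σ i x|) ^ 2 := by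
  have hσ : Function.Injective σ := fun i j hij ↦ hx (congrArg (fun φ : K →+* ℝ ↦ φ x) hij)
  have hdiscr := discr_powers_eq_prod_sq hcard hσ x
  obtain ⟨m, hm⟩ := exists_discr_eq_sq_mul hcard fun i : Fin n ↦ x ^ (i : ℕ)
  have hm0 : m ≠ 0 := by
    rintro rfl
    rw [hm, zero_pow two_ne_zero, zero_mul, Int.cast_zero, eq_comm, sq_eq_zero_iff,
      prod_eq_zero_iff] at hdiscr
    obtain ⟨i, -, hi⟩ := hdiscr
    obtain ⟨j, hj, hij⟩ := prod_eq_zero_iff.1 hi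
    exact (mem_Ioi.1 hj).ne' (hx (sub_eq_zero.1 hij))
  simp only [← abs_prod, sq_abs]
  rw [← abs_of_nonneg (sq_nonneg (∏ i, ∏ j ∈ Ioi i, (σ j x - σ i x))), ← hdiscr, hm, Int.cast_mul,
    abs_mul]
  refine le_mul_of_one_le_left (abs_nonneg _) ?_
  exact_mod_cast Int.one_le_abs (pow_ne_zero 2 hm0)

end RealEmbeddings

theorem prod_Ioi_castSucc {α : Type*} [CommMonoid α] {d : ℕ} (i : Fin d) (F : Fin (d + 1) → α) :
    ∏ j ∈ Ioi i.castSucc, F j = (∏ j ∈ Ioi i, F j.castSucc) * F (Fin.last d) := by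
  simp_rw [← filter_lt_eq_Ioi, prod_filter, Fin.prod_univ_castSucc, Fin.castSucc_lt_castSucc_iff,
    if_pos (Fin.castSucc_lt_last i)]

/-- A totally real number field of degree `n`, realised inside `ℂ`, together with an integral
generator `x` and an enumeration `σ` of its real embeddings. That `x` generates the field is encoded
by its conjugates `σ i x` being distinct. -/
structure MarkedField (n : ℕ) where
  carrier : IntermediateField ℚ ℂ
  finiteDimensional : FiniteDimensional ℚ carrier
  finrank_eq : Module.finrank ℚ carrier = n
  x : 𝓞 carrier
  σ : Fin n → carrier →+* ℝ
  injective_apply : Function.Injective fun i ↦ σ i x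

namespace MarkedField

variable {n : ℕ}

attribute [instance] finiteDimensional

/-- The vector of conjugates of the marked generator. -/
noncomputable def conj (M : MarkedField n) (i : Fin n) : ℝ := M.σ i M.x

theorem injective_σ (M : MarkedField n) : Function.Injective M.σ :=
  fun _ _ hij ↦ M.injective_apply (congrArg (fun φ : M.carrier →+* ℝ ↦ φ M.x) hij)

theorem finrank_eq_card (M : MarkedField n) :
    Module.finrank ℚ M.carrier = Fintype.card (Fin n) := by
  rw [M.finrank_eq, Fintype.card_fin]

theorem eq_of_prod_abs_sub_lt_one (M : MarkedField n) {y z : 𝓞 M.carrier}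
    (hlt : ∏ i, |M.σ i y - M.σ i z| < 1) : y = z := by
  by_contra hne
  refine (one_le_prod_abs_realEmbeddings M.finrank_eq_card M.injective_σ
    (sub_ne_zero.2 hne)).not_gt ?_
  simpa only [map_sub] using hlt

theorem exists_perm_of_ringEquiv (M M₀ : MarkedField n) (ψ : M.carrier ≃+* M₀.carrier) :
    ∃ π : Equiv.Perm (Fin n), ∀ i y, M₀.σ i (ψ y) = M.σ (π i) y := by
  choose π hπ using fun i ↦ (bijective_of_injective_realEmbeddings M.finrank_eq_card
    M.injective_σ).2 ((M₀.σ i).comp (ψ : M.carrier →+* M₀.carrier))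
  have hinj : Function.Injective π := by
    intro i j hij
    have hcomp := (hπ i).symm.trans ((congrArg M.σ hij).trans (hπ j))
    refine M₀.injective_σ (RingHom.ext fun y ↦ ?_)
    simpa using RingHom.congr_fun hcomp (ψ.symm y)
  exact ⟨Equiv.ofBijective π (Finite.injective_iff_bijective.1 hinj),
    fun i y ↦ (RingHom.congr_fun (hπ i) y).symm⟩

theorem conj_eq_of_perm_eq {M M' M₀ : MarkedField n} {ψ : M.carrier ≃+* M₀.carrier}
    {ψ' : M'.carrier ≃+* M₀.carrier} {π : Equiv.Perm (Fin n)}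
    (hπ : ∀ i y, M₀.σ i (ψ y) = M.σ (π i) y) (hπ' : ∀ i y, M₀.σ i (ψ' y) = M'.σ (π i) y)
    (hlt : ∏ i, |M.conj i - M'.conj i| < 1) : M.conj = M'.conj := by
  let y : 𝓞 M₀.carrier := RingOfIntegers.mapRingEquiv ψ M.x
  let y' : 𝓞 M₀.carrier := RingOfIntegers.mapRingEquiv ψ' M'.x
  have hy : ∀ i, M₀.σ i y = M.conj (π i) := fun i ↦ hπ i M.x
  have hy' : ∀ i, M₀.σ i y' = M'.conj (π i) := fun i ↦ hπ' i M'.x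
  have hyy' : y = y' := by
    refine M₀.eq_of_prod_abs_sub_lt_one ?_
    simpa only [hy, hy', Equiv.prod_comp π fun i ↦ |M.conj i - M'.conj i|] using hlt
  funext i
  rw [← π.apply_symm_apply i, ← hy, ← hy', hyy']

theorem card_le_factorial_of_ringEquiv {ι : Type*} [Fintype ι] (M : ι → MarkedField n)
    (M₀ : MarkedField n) (hiso : ∀ k, Nonempty ((M k).carrier ≃+* M₀.carrier))
    (hinj : Function.Injective fun k ↦ (M k).conj)
    (hlt : ∀ k k', k ≠ k' → ∏ i, |(M k).conj i - (M k').conj i| < 1) :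
    Fintype.card ι ≤ n.factorial := by
  choose π hπ using fun k ↦ (M k).exists_perm_of_ringEquiv M₀ (hiso k).some
  have hπinj : Function.Injective π := by
    intro k k' hkk'
    by_contra hne
    exact hne (hinj (conj_eq_of_perm_eq (hπ k) (hkk' ▸ hπ k') (hlt k k' hne)))
  simpa [Fintype.card_perm] using Fintype.card_le_of_injective π hπinj

theorem abs_discr_le {d : ℕ} (M : MarkedField (d + 1)) {L R : ℝ} (hR1 : 1 ≤ R)
    (hR : ∀ i j : Fin d, |M.conj j.castSucc - M.conj i.castSucc| ≤ R)
    (hL : ∀ i : Fin d, |M.conj (Fin.last d) - M.conj i.castSucc| ≤ L) :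
    |(discr M.carrier : ℝ)| ≤ ((L * R ^ d) ^ d) ^ 2 := by
  have hinner (i : Fin d) :
      ∏ j ∈ Ioi i.castSucc, |M.conj j - M.conj i.castSucc| ≤ L * R ^ d := by
    rw [prod_Ioi_castSucc, mul_comm]
    refine mul_le_mul (hL i) ?_ (prod_nonneg fun _ _ ↦ abs_nonneg _) ((abs_nonneg _).trans (hL i))
    refine (prod_le_prod (fun _ _ ↦ abs_nonneg _) fun j _ ↦ hR i j).trans ?_
    rw [prod_const]
    exact pow_le_pow_right₀ hR1 ((card_le_univ _).trans_eq (Fintype.card_fin d))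
  have houter : ∏ i, ∏ j ∈ Ioi i, |M.conj j - M.conj i| ≤ (L * R ^ d) ^ d := by
    rw [Fin.prod_univ_castSucc, ← Fin.top_eq_last, Ioi_top, prod_empty, mul_one]
    calc _ ≤ ∏ _i : Fin d, L * R ^ d :=
          prod_le_prod (fun _ _ ↦ prod_nonneg fun _ _ ↦ abs_nonneg _) fun i _ ↦ hinner i
      _ = (L * R ^ d) ^ d := Fin.prod_const d _
  refine (abs_discr_le_prod_sq M.finrank_eq M.injective_apply).trans ?_
  exact pow_le_pow_left₀ (prod_nonneg fun _ _ ↦ prod_nonneg fun _ _ ↦ abs_nonneg _) houter 2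

open IntermediateField in
theorem exists_conj_eq {f : ℤ[X]} (hmonic : f.Monic) (hirr : Irreducible f) {ρ : Fin n → ℝ}
    (hρ : Function.Injective ρ) (hroots : ∀ i, aeval (ρ i) f = 0) (hdeg : f.natDegree = n) :
    ∃ M : MarkedField n, M.conj = ρ ∧ aeval M.x f = 0 := by
  have hn : 0 < n := by
    rw [← hdeg]
    exact hmonic.natDegree_pos_of_not_isUnit hirr.not_isUnit
  let r : ℂ := (ρ ⟨0, hn⟩ : ℝ)
  have hr : aeval r f = 0 := by
    rw [← map_zero (algebraMap ℝ ℂ), ← hroots ⟨0, hn⟩, ← aeval_algebraMap_apply]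
    rfl
  have hmin := minpoly_rat_eq_map hmonic hirr hr
  have hint : IsIntegral ℚ r := IsIntegral.tower_top (R := ℤ) ⟨f, hmonic, hr⟩
  have hgen : aeval (AdjoinSimple.gen ℚ r) f = 0 := by
    refine (algebraMap ℚ⟮r⟯ ℂ).injective ?_
    rw [map_zero, ← aeval_algebraMap_apply, AdjoinSimple.algebraMap_gen, hr]
  have : FiniteDimensional ℚ ℚ⟮r⟯ := adjoin.finiteDimensional hint
  have hfinrank : Module.finrank ℚ ℚ⟮r⟯ = n := by
    rw [adjoin.finrank hint, hmin, hmonic.natDegree_map, hdeg]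
  choose σ hσ using fun i ↦ exists_ringHom_apply_eq_of_irreducible hmonic hirr hgen
    (hdeg.trans hfinrank.symm) (hroots i)
  let x : 𝓞 ℚ⟮r⟯ := ⟨AdjoinSimple.gen ℚ r, f, hmonic, hgen⟩
  refine ⟨⟨ℚ⟮r⟯, this, hfinrank, x, σ, ?_⟩, funext hσ, ?_⟩
  · exact (funext hσ : (fun i ↦ σ i x) = ρ) ▸ hρ
  · refine RingOfIntegers.coe_injective ?_
    rw [map_zero, ← aeval_algebraMap_apply]
    exact hgen

end MarkedField

section Products

variable {ι : Type*} {s : Finset ι} {g : ι → ℝ} {c : ℝ}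

theorem abs_prod_le_pow_card (hg : ∀ i ∈ s, |g i| ≤ c) : |∏ i ∈ s, g i| ≤ c ^ #s := by
  rw [abs_prod, ← prod_const]
  exact prod_le_prod (fun _ _ ↦ abs_nonneg _) hg

theorem pow_card_le_abs_prod (hc : 0 ≤ c) (hg : ∀ i ∈ s, c ≤ |g i|) :
    c ^ #s ≤ |∏ i ∈ s, g i| := by
  rw [abs_prod, ← prod_const]
  exact prod_le_prod (fun _ _ ↦ hc) hg

end Products

section Irreducibility

variable {ι : Type*} [Fintype ι] {ρ : ι → ℝ}

theorem exists_eq_prod_X_sub_C_of_mul_eq {g h : ℝ[X]} (hg : g.Monic)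
    (hgh : g * h = ∏ i, (X - C (ρ i))) :
    ∃ s t : Finset ι, Disjoint s t ∧ g = ∏ i ∈ s, (X - C (ρ i)) ∧
      h = ∏ i ∈ t, (X - C (ρ i)) := by
  classical
  obtain ⟨s, t, a, c, -, hst, hac, hga, hhc⟩ :=
    mul_eq_mul_prime_prod (fun i _ ↦ prime_X_sub_C (ρ i)) (hgh.trans (one_mul _).symm)
  have ha : a = 1 := by
    have hamonic : a.Monic := (monic_prod_X_sub_C ρ s).of_mul_monic_right (hga ▸ hg)
    exact hamonic.eq_one_of_isUnit (.of_mul_eq_one c hac.symm)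
  have hc : c = 1 := by rw [hac, ha, one_mul]
  exact ⟨s, t, hst, by rw [hga, ha, one_mul], by rw [hhc, hc, one_mul]⟩

/-- A monic factor avoiding the root `ρ i₀` would take an integer value of absolute value less than
`1` at a point where `f` does not vanish. -/
theorem irreducible_of_prod_abs_sub_lt_one {f : ℤ[X]} (hmonic : f.Monic)
    (hf : f.map (algebraMap ℤ ℝ) = ∏ i, (X - C (ρ i))) (i₀ : ι)
    (hsmall : ∀ s : Finset ι, s.Nonempty → i₀ ∉ s →
      ∃ a : ℤ, f.eval a ≠ 0 ∧ |∏ i ∈ s, ((a : ℝ) - ρ i)| < 1) : Irreducible f := by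
  classical
  have hfactor {g h : ℤ[X]} {s : Finset ι} (hg : g.Monic) (hgh : g * h = f) (hs : i₀ ∉ s)
      (hgs : g.map (algebraMap ℤ ℝ) = ∏ i ∈ s, (X - C (ρ i))) : g.natDegree = 0 := by
    rw [← hg.natDegree_map (algebraMap ℤ ℝ), hgs]
    rcases s.eq_empty_or_nonempty with rfl | hne
    · simp
    obtain ⟨a, ha, hlt⟩ := hsmall s hne hs
    have heval : ((g.eval a : ℤ) : ℝ) = ∏ i ∈ s, ((a : ℝ) - ρ i) := by
      rw [← eq_intCast (algebraMap ℤ ℝ), ← eval_map_apply, hgs]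
      simp [eval_prod]
    rw [← heval, ← Int.cast_abs] at hlt
    have hzero : g.eval a = 0 := Int.abs_lt_one_iff.1 (by exact_mod_cast hlt)
    exact absurd (by rw [← hgh, eval_mul, hzero, zero_mul]) ha
  have hf1 : f ≠ 1 := by
    rintro rfl
    have hdeg := congrArg natDegree hf
    simp only [Polynomial.map_one, natDegree_one, natDegree_finsetProd_X_sub_C_eq_card] at hdeg
    exact (card_pos.2 ⟨i₀, mem_univ i₀⟩).ne hdeg
  refine hmonic.irreducible_iff_natDegree.2 ⟨hf1, fun g h hg hh hgh ↦ ?_⟩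
  obtain ⟨s, t, hst, hgs, hht⟩ := exists_eq_prod_X_sub_C_of_mul_eq
    (hg.map (algebraMap ℤ ℝ)) (by rw [← Polynomial.map_mul, hgh, hf])
  by_cases hs : i₀ ∈ s
  · exact .inr (hfactor hh (mul_comm g h ▸ hgh) (disjoint_left.1 hst hs) hht)
  · exact .inl (hfactor hg hgh hs hgs)

end Irreducibility

theorem map_eq_prod_X_sub_C {ι : Type*} [Fintype ι] {f : ℤ[X]} (hmonic : f.Monic)
    (hdeg : f.natDegree = Fintype.card ι)
    {ρ : ι → ℝ} (hρ : Function.Injective ρ) (hroots : ∀ i, aeval (ρ i) f = 0) :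
    f.map (algebraMap ℤ ℝ) = ∏ i, (X - C (ρ i)) := by
  have hdvd : ∏ i, (X - C (ρ i)) ∣ f.map (algebraMap ℤ ℝ) :=
    prod_dvd_of_coprime (fun i _ j _ hij ↦ pairwise_coprime_X_sub_C hρ hij)
      fun i _ ↦ dvd_iff_isRoot.2 (by rw [IsRoot, eval_map_algebraMap, hroots i])
  refine eq_of_monic_of_dvd_of_natDegree_le (monic_prod_X_sub_C ρ univ)
    (hmonic.map _) hdvd ?_
  rw [hmonic.natDegree_map, hdeg, natDegree_finsetProd_X_sub_C_eq_card, card_univ]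

section ShiftedProduct

variable {ι : Type*} [Fintype ι] {u : ℤ} {b : ι → ℤ}

theorem degree_linear_lt_degree_prod_X_sub_C (hι : 1 < Fintype.card ι) (u : ℤ) (b : ι → ℤ) :
    (C u * X + 1 : ℤ[X]).degree < (∏ i, (X - C (b i))).degree := by
  rw [degree_eq_natDegree (monic_prod_X_sub_C b univ).ne_zero,
    natDegree_finsetProd_X_sub_C_eq_card, card_univ]
  refine (degree_linear_le (a := u) (b := 1)).trans_lt ?_
  exact_mod_cast hι

theorem monic_shiftedProd (hι : 1 < Fintype.card ι) : (shiftedProd u b).Monic :=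
  (monic_prod_X_sub_C b univ).sub_of_left (degree_linear_lt_degree_prod_X_sub_C hι u b)

theorem natDegree_shiftedProd (hι : 1 < Fintype.card ι) :
    (shiftedProd u b).natDegree = Fintype.card ι := by
  rw [shiftedProd, natDegree_eq_of_degree_eq (degree_sub_eq_left_of_degree_lt
    (degree_linear_lt_degree_prod_X_sub_C hι u b)), natDegree_finsetProd_X_sub_C_eq_card, card_univ]

theorem eval_shiftedProd_self (i : ι) : (shiftedProd u b).eval (b i) = -(u * b i + 1) := by
  simp [shiftedProd, eval_prod, prod_eq_zero (mem_univ i)]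

end ShiftedProduct

theorem exists_sub_mul_eq_of_le_abs {Q s : ℝ → ℝ} (hQ : Continuous Q) (hs : Continuous s)
    {a δ m B : ℝ} (hδ : 0 ≤ δ) (hm : 0 < m) (hQm : ∀ x, |x - a| ≤ δ → m ≤ |Q x|)
    (hsB : ∀ x, |x - a| ≤ δ → |s x| ≤ B) (hB : B ≤ m * δ) :
    ∃ r, |r - a| ≤ δ ∧ (r - a) * Q r = s r := by
  have hmem (x) : x ∈ Set.Icc (a - δ) (a + δ) ↔ |x - a| ≤ δ := by
    rw [← Real.closedBall_eq_Icc, Metric.mem_closedBall, Real.dist_eq]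
  have hQ0 (x) (hx : |x - a| ≤ δ) : Q x ≠ 0 := abs_pos.1 (hm.trans_le (hQm x hx))
  have hquot (x) (hx : |x - a| ≤ δ) : |s x / Q x| ≤ δ := by
    rw [abs_div, div_le_iff₀ (hm.trans_le (hQm x hx)), mul_comm]
    exact (hsB x hx).trans (hB.trans (mul_le_mul_of_nonneg_right (hQm x hx) hδ))
  have hcont : ContinuousOn (fun x ↦ x - a - s x / Q x) (Set.Icc (a - δ) (a + δ)) :=
    (by fun_prop : Continuous fun x ↦ x - a).continuousOn.sub
      (hs.continuousOn.div hQ.continuousOn fun x hx ↦ hQ0 x ((hmem x).1 hx))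
  have hleft := abs_le.1 (hquot (a - δ) (by simp [abs_of_nonneg hδ]))
  have hright := abs_le.1 (hquot (a + δ) (by simp [abs_of_nonneg hδ]))
  obtain ⟨r, hr, hr0⟩ := intermediate_value_Icc (by linarith) hcont
    (show (0 : ℝ) ∈ _ from ⟨by linarith, by linarith⟩)
  rw [hmem] at hr
  exact ⟨r, hr, (eq_div_iff (hQ0 r hr)).1 (sub_eq_zero.1 hr0)⟩

/-- The last entry of `b` is large compared with `R`, which bounds `u` and the other entries. The
roots of `shiftedProd u b` are then real and lie within `δ` of the entries of `b`. -/
structure HasDominantLast {d : ℕ} (u : ℤ) (b : Fin (d + 1) → ℤ) (R δ : ℝ) : Prop where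
  two_le : 2 ≤ d
  one_le : 1 ≤ u
  injective : Function.Injective b
  bound_le (i : Fin d) : 2 * (u * (|(b i.castSucc : ℝ)| + 1) + 1) ≤ R
  pos : 0 < δ
  le_quarter : δ ≤ 1 / 4
  le_mul_last : 2 ^ (d + 1) * R ≤ δ * b (Fin.last d)
  mul_lt_one : δ * √(b (Fin.last d)) * R ^ (d + 3) < 1

theorem one_le_abs_sub_intCast {m n : ℤ} (h : m ≠ n) : 1 ≤ |(m : ℝ) - n| := by
  exact_mod_cast Int.one_le_abs (sub_ne_zero.2 h)

theorem abs_intCast_mul_add_one_le {u : ℤ} (hu : 0 ≤ u) {x B : ℝ} (hx : |x| ≤ B) :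
    |u * x + 1| ≤ u * B + 1 := by
  refine (abs_add_le _ _).trans ?_
  rw [abs_mul, abs_one, abs_of_nonneg (Int.cast_nonneg hu)]
  gcongr

namespace HasDominantLast

variable {d : ℕ} {u : ℤ} {b : Fin (d + 1) → ℤ} {R δ : ℝ}

theorem one_lt_card (h : HasDominantLast u b R δ) : 1 < Fintype.card (Fin (d + 1)) := by
  have := h.two_le
  simp only [Fintype.card_fin]
  omega

theorem abs_add_one_le (h : HasDominantLast u b R δ) (i : Fin d) :
    2 * (|(b i.castSucc : ℝ)| + 1) ≤ R := by
  have hu : (1 : ℝ) ≤ u := by exact_mod_cast h.one_le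
  nlinarith [h.bound_le i, abs_nonneg (b i.castSucc : ℝ)]

theorem two_mul_add_one_le (h : HasDominantLast u b R δ) : 2 * ((u : ℝ) + 1) ≤ R := by
  have hu : (1 : ℝ) ≤ u := by exact_mod_cast h.one_le
  have hd := h.two_le
  nlinarith [h.bound_le ⟨0, by omega⟩, abs_nonneg (b (Fin.castSucc ⟨0, by omega⟩) : ℝ)]

theorem four_le (h : HasDominantLast u b R δ) : 4 ≤ R := by
  have hu : (1 : ℝ) ≤ u := by exact_mod_cast h.one_le
  linarith [h.two_mul_add_one_le]

theorem eight_mul_le_mul_last (h : HasDominantLast u b R δ) : 8 * R ≤ δ * b (Fin.last d) := by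
  have hpow : (2 : ℝ) ^ 3 ≤ 2 ^ (d + 1) :=
    pow_le_pow_right₀ one_le_two (Nat.succ_le_succ h.two_le)
  nlinarith [h.le_mul_last, h.four_le]

theorem mul_le_last (h : HasDominantLast u b R δ) : 32 * R ≤ b (Fin.last d) := by
  have hlast : (0 : ℝ) ≤ b (Fin.last d) :=
    (pos_of_mul_pos_right (by linarith [h.eight_mul_le_mul_last, h.four_le]) h.pos.le).le
  nlinarith [h.eight_mul_le_mul_last, h.le_quarter]

theorem half_le_abs_sub (h : HasDominantLast u b R δ) {i j : Fin (d + 1)} (hij : i ≠ j) {x : ℝ}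
    (hx : |x - b i| ≤ δ) : 1 / 2 ≤ |x - b j| := by
  have hsub := one_le_abs_sub_intCast (h.injective.ne hij)
  have htri := abs_sub_le (b i : ℝ) x (b j)
  rw [abs_sub_comm (b i : ℝ) x] at htri
  linarith [h.le_quarter]

theorem div_two_pow_le_abs_prod_erase (h : HasDominantLast u b R δ) (i : Fin d) {x : ℝ}
    (hx : |x - b i.castSucc| ≤ δ) :
    (b (Fin.last d) : ℝ) / 2 ^ d ≤ |∏ j ∈ univ.erase i.castSucc, (x - b j)| := by
  have hlast : (b (Fin.last d) : ℝ) / 2 ≤ |x - b (Fin.last d)| := by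
    have hxabs := abs_sub_abs_le_abs_sub x (b i.castSucc)
    have hrev := abs_sub_abs_le_abs_sub (b (Fin.last d) : ℝ) x
    rw [abs_sub_comm _ x] at hrev
    linarith [h.abs_add_one_le i, h.le_quarter, h.mul_le_last, h.four_le,
      le_abs_self (b (Fin.last d) : ℝ)]
  have hrest := pow_card_le_abs_prod (s := (univ.erase i.castSucc).erase (Fin.last d))
    (by norm_num) fun j hj ↦
      h.half_le_abs_sub (ne_of_mem_erase (mem_of_mem_erase hj)).symm hx
  have hmem : Fin.last d ∈ univ.erase i.castSucc :=
    mem_erase.2 ⟨(Fin.castSucc_lt_last i).ne', mem_univ _⟩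
  have hcard : #((univ.erase i.castSucc).erase (Fin.last d)) = d - 1 := by
    rw [card_erase_of_mem hmem, card_erase_of_mem (mem_univ _), card_univ, Fintype.card_fin,
      Nat.add_sub_cancel]
  have hd : d - 1 + 1 = d := Nat.sub_add_cancel (by have := h.two_le; omega)
  rw [← mul_prod_erase _ _ hmem, abs_mul]
  calc (b (Fin.last d) : ℝ) / 2 ^ d = b (Fin.last d) / 2 ^ (d - 1 + 1) := by rw [hd]
    _ = b (Fin.last d) / 2 * (1 / 2) ^ (d - 1) := by rw [pow_succ, one_div, inv_pow]; ring
    _ ≤ _ := mul_le_mul hlast (hcard ▸ hrest) (by positivity) (abs_nonneg _)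

theorem exists_root_castSucc (h : HasDominantLast u b R δ) (i : Fin d) :
    ∃ r : ℝ, |r - b i.castSucc| ≤ δ ∧ aeval r (shiftedProd u b) = 0 := by
  have hA : (0 : ℝ) < b (Fin.last d) := by linarith [h.mul_le_last, h.four_le]
  have hR := h.four_le
  have hlinear (x : ℝ) (hx : |x - b i.castSucc| ≤ δ) : |u * x + 1| ≤ R / 2 := by
    have hxabs := abs_sub_abs_le_abs_sub x (b i.castSucc)
    refine (abs_intCast_mul_add_one_le (B := |(b i.castSucc : ℝ)| + 1) ?_ ?_).trans ?_
    · linarith [h.one_le]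
    · linarith [h.le_quarter]
    · linarith [h.bound_le i]
  have hδ : R / 2 ≤ b (Fin.last d) / 2 ^ d * δ :=
    calc R / 2 ≤ 2 ^ (d + 1) * R / 2 ^ d := by
          rw [pow_succ, mul_assoc, mul_div_cancel_left₀ _ (by positivity)]
          linarith
      _ ≤ δ * b (Fin.last d) / 2 ^ d :=
          div_le_div_of_nonneg_right h.le_mul_last (by positivity)
      _ = b (Fin.last d) / 2 ^ d * δ := by ring
  obtain ⟨r, hr, hroot⟩ := exists_sub_mul_eq_of_le_abs
    (Q := fun r ↦ ∏ j ∈ univ.erase i.castSucc, (r - b j)) (by fun_prop)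
    (by fun_prop : Continuous fun r : ℝ ↦ u * r + 1) h.pos.le (by positivity)
    (fun x hx ↦ h.div_two_pow_le_abs_prod_erase i hx) hlinear hδ
  refine ⟨r, hr, ?_⟩
  rw [aeval_shiftedProd, ← mul_prod_erase univ _ (mem_univ i.castSucc), hroot, sub_self]

theorem half_pow_le_abs_prod_erase (h : HasDominantLast u b R δ) {x : ℝ}
    (hx : |x - b (Fin.last d)| ≤ δ) :
    ((b (Fin.last d) : ℝ) / 2) ^ d ≤ |∏ j ∈ univ.erase (Fin.last d), (x - b j)| := by
  have hcard : #(univ.erase (Fin.last d)) = d := by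
    rw [card_erase_of_mem (mem_univ _), card_univ, Fintype.card_fin, Nat.add_sub_cancel]
  nth_rw 2 [← hcard]
  refine pow_card_le_abs_prod (by linarith [h.mul_le_last, h.four_le]) fun j hj ↦ ?_
  obtain ⟨j, rfl⟩ := Fin.exists_castSucc_eq.2 (ne_of_mem_erase hj)
  refine le_trans ?_ (le_abs_self _)
  linarith [(abs_le.1 hx).1, h.abs_add_one_le j, h.le_quarter, h.mul_le_last, h.four_le,
    le_abs_self (b j.castSucc : ℝ)]

theorem abs_mul_add_one_le_of_abs_sub_last_le (h : HasDominantLast u b R δ) {x : ℝ}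
    (hx : |x - b (Fin.last d)| ≤ δ) : |u * x + 1| ≤ R * b (Fin.last d) := by
  have hA := h.mul_le_last
  have hR := h.four_le
  have hxabs : |x| ≤ b (Fin.last d) + 1 := by
    rw [abs_le] at hx ⊢
    constructor <;> linarith [h.le_quarter]
  refine (abs_intCast_mul_add_one_le (by linarith [h.one_le]) hxabs).trans ?_
  nlinarith [h.two_mul_add_one_le]

theorem exists_root_last (h : HasDominantLast u b R δ) :
    ∃ r : ℝ, |r - b (Fin.last d)| ≤ δ ∧ aeval r (shiftedProd u b) = 0 := by
  have hA := h.mul_le_last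
  have hR := h.four_le
  have hA0 : (0 : ℝ) < b (Fin.last d) := by linarith
  have hpow : ((b (Fin.last d) : ℝ) / 2) ^ 2 ≤ (b (Fin.last d) / 2) ^ d :=
    pow_le_pow_right₀ (by linarith) h.two_le
  have hδ : R * b (Fin.last d) ≤ (b (Fin.last d) / 2) ^ d * δ :=
    calc R * b (Fin.last d) ≤ δ * b (Fin.last d) / 4 * b (Fin.last d) := by
          gcongr
          linarith [h.eight_mul_le_mul_last]
      _ = (b (Fin.last d) / 2) ^ 2 * δ := by ring
      _ ≤ _ := mul_le_mul_of_nonneg_right hpow h.pos.le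
  obtain ⟨r, hr, hroot⟩ := exists_sub_mul_eq_of_le_abs
    (Q := fun r ↦ ∏ j ∈ univ.erase (Fin.last d), (r - b j)) (by fun_prop)
    (by fun_prop : Continuous fun r : ℝ ↦ u * r + 1) h.pos.le (by positivity)
    (fun x hx ↦ h.half_pow_le_abs_prod_erase hx)
    (fun x hx ↦ h.abs_mul_add_one_le_of_abs_sub_last_le hx) hδ
  refine ⟨r, hr, ?_⟩
  rw [aeval_shiftedProd, ← mul_prod_erase univ _ (mem_univ (Fin.last d)), hroot, sub_self]

theorem exists_roots (h : HasDominantLast u b R δ) :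
    ∃ ρ : Fin (d + 1) → ℝ, ∀ i, |ρ i - b i| ≤ δ ∧ aeval (ρ i) (shiftedProd u b) = 0 := by
  have hroot (i) : ∃ r : ℝ, |r - b i| ≤ δ ∧ aeval r (shiftedProd u b) = 0 := by
    induction i using Fin.lastCases with
    | last => exact h.exists_root_last
    | cast i => exact h.exists_root_castSucc i
  exact Classical.skolem.1 hroot

section Roots

variable {ρ : Fin (d + 1) → ℝ}

theorem injective_of_abs_sub_le (h : HasDominantLast u b R δ) (hρ : ∀ i, |ρ i - b i| ≤ δ) :
    Function.Injective ρ := by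
  intro i j hij
  by_contra hne
  have hhalf := h.half_le_abs_sub hne (hρ i)
  rw [hij] at hhalf
  linarith [hρ j, h.le_quarter]

theorem abs_castSucc_le (h : HasDominantLast u b R δ) (hρ : ∀ i, |ρ i - b i| ≤ δ) (i : Fin d) :
    2 * |ρ i.castSucc| ≤ R := by
  have hxabs := abs_sub_abs_le_abs_sub (ρ i.castSucc) (b i.castSucc)
  linarith [hρ i.castSucc, h.le_quarter, h.abs_add_one_le i]

theorem abs_intCast_sub_castSucc_le (h : HasDominantLast u b R δ) (hρ : ∀ i, |ρ i - b i| ≤ δ)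
    (i j : Fin d) : |(b i.castSucc : ℝ) - ρ j.castSucc| ≤ R := by
  refine (abs_sub _ _).trans ?_
  linarith [h.abs_castSucc_le hρ j, h.abs_add_one_le i]

theorem abs_prod_sub_lt_one (h : HasDominantLast u b R δ) (hρ : ∀ i, |ρ i - b i| ≤ δ)
    {s : Finset (Fin (d + 1))} (hlast : Fin.last d ∉ s) {k : Fin d} (hk : k.castSucc ∈ s) :
    |∏ i ∈ s, ((b k.castSucc : ℝ) - ρ i)| < 1 := by
  have hR := h.four_le
  have hrest : |∏ i ∈ s.erase k.castSucc, ((b k.castSucc : ℝ) - ρ i)| ≤ R ^ (d + 3) := by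
    refine (abs_prod_le_pow_card fun i hi ↦ ?_).trans (pow_le_pow_right₀ (by linarith) ?_)
    · obtain ⟨i, rfl⟩ :=
        Fin.exists_castSucc_eq.2 fun hi' ↦ hlast (hi' ▸ mem_of_mem_erase hi)
      exact h.abs_intCast_sub_castSucc_le hρ k i
    · refine (card_le_univ _).trans ?_
      rw [Fintype.card_fin]
      omega
  rw [← mul_prod_erase _ _ hk, abs_mul, abs_sub_comm]
  have hsqrt : 1 ≤ √(b (Fin.last d) : ℝ) := Real.one_le_sqrt.2 (by linarith [h.mul_le_last])
  calc _ ≤ δ * R ^ (d + 3) := mul_le_mul (hρ _) hrest (abs_nonneg _) h.pos.le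
    _ ≤ δ * √(b (Fin.last d)) * R ^ (d + 3) := by
        gcongr
        exact le_mul_of_one_le_right h.pos.le hsqrt
    _ < 1 := h.mul_lt_one

theorem irreducible_shiftedProd (h : HasDominantLast u b R δ) (hρ : ∀ i, |ρ i - b i| ≤ δ)
    (hne : ∀ i, u * b i + 1 ≠ 0) (hroots : ∀ i, aeval (ρ i) (shiftedProd u b) = 0) :
    Irreducible (shiftedProd u b) := by
  have hcard := h.one_lt_card
  refine irreducible_of_prod_abs_sub_lt_one (monic_shiftedProd hcard)
    (map_eq_prod_X_sub_C (monic_shiftedProd hcard) (natDegree_shiftedProd hcard)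
      (h.injective_of_abs_sub_le hρ) hroots) (Fin.last d) fun s hs hlast ↦ ?_
  obtain ⟨k, hk⟩ := hs
  obtain ⟨k, rfl⟩ := Fin.exists_castSucc_eq.2 fun hk' ↦ hlast (hk' ▸ hk)
  exact ⟨b k.castSucc, by rw [eval_shiftedProd_self, neg_ne_zero]; exact hne _,
    h.abs_prod_sub_lt_one hρ hlast hk⟩

end Roots

end HasDominantLast

theorem abs_sub_le_abs_pow_sub_pow {x y : ℝ} (hx : 0 ≤ x) (hy : 1 ≤ y) {p : ℕ} (hp : p ≠ 0) :
    |x - y| ≤ |x ^ p - y ^ p| := by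
  have hsum : 1 ≤ ∑ i ∈ range p, x ^ i * y ^ (p - 1 - i) := by
    refine le_trans ?_ (single_le_sum (fun i _ ↦ by positivity) (mem_range.2 hp.bot_lt))
    simpa using one_le_pow₀ hy
  rw [← geom_sum₂_mul, abs_mul, abs_of_pos (zero_lt_one.trans_le hsum)]
  exact le_mul_of_one_le_left (abs_nonneg _) hsum

theorem le_of_pow_le_pow_of_le {x B : ℝ} {p q : ℕ} (hqp : q ≤ p) (hq : q ≠ 0) (hB : 1 ≤ B)
    (h : x ^ p ≤ B ^ q) : x ≤ B :=
  le_of_pow_le_pow_left₀ (hq.bot_lt.trans_le hqp).ne' (zero_le_one.trans hB)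
    (h.trans (pow_le_pow_right₀ hB hqp))

theorem prod_univ_le_mul_pow_mul {d : ℕ} {F : Fin (d + 1) → ℝ} (hF : ∀ i, 0 ≤ F i) {k : Fin d}
    {ε R L : ℝ} (hR1 : 1 ≤ R) (hk : F k.castSucc ≤ ε) (hR : ∀ i : Fin d, F i.castSucc ≤ R)
    (hL : F (Fin.last d) ≤ L) : ∏ i, F i ≤ ε * R ^ d * L := by
  have hrest : ∏ i ∈ univ.erase k, F i.castSucc ≤ R ^ d := by
    refine (prod_le_prod (fun _ _ ↦ hF _) fun i _ ↦ hR i).trans ?_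
    rw [prod_const]
    exact pow_le_pow_right₀ hR1 ((card_le_univ _).trans_eq (Fintype.card_fin d))
  have hε : 0 ≤ ε := (hF _).trans hk
  rw [Fin.prod_univ_castSucc, ← mul_prod_erase _ _ (mem_univ k)]
  exact mul_le_mul (mul_le_mul hk hrest (prod_nonneg fun _ _ ↦ hF _) hε) hL (hF _) (by positivity)

/-- The sign of a `p`-th root of `±y` is chosen to make it nonnegative, hence close to `m`, under
one embedding; its other conjugates are too small for it to differ from `m`. -/
theorem MarkedField.exists_eq_intCast_of_isPowUpToSign {d : ℕ} (M : MarkedField (d + 1))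
    {y : 𝓞 M.carrier} {p : ℕ} (hp : 2 ≤ p) (hy : IsPowUpToSign p y) {m : ℤ} {k : Fin d}
    {ε R B : ℝ} (hm : 1 ≤ m) (hmR : 2 * (m : ℝ) ≤ R) (hB : 1 ≤ B)
    (hk : |M.σ k.castSucc y - m ^ p| ≤ ε) (hR : ∀ i : Fin d, 2 * |M.σ i.castSucc y| ≤ R)
    (hlast : |M.σ (Fin.last d) y| ≤ B ^ 2) (hlt : ε * R ^ d * (R * B) < 1) :
    ∃ a : ℤ, y = a := by
  have hm' : (1 : ℝ) ≤ m := by exact_mod_cast hm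
  have hp0 : p ≠ 0 := by omega
  obtain ⟨z, hz0, hyz⟩ := hy.exists_nonneg ((M.σ k.castSucc).comp (algebraMap (𝓞 M.carrier) _))
  change 0 ≤ M.σ k.castSucc z at hz0
  have hσ (i) : M.σ i y = M.σ i z ^ p ∨ M.σ i y = -M.σ i z ^ p := by
    refine hyz.imp ?_ ?_ <;> rintro rfl <;> simp
  have hpow (i) : |M.σ i z| ^ p = |M.σ i y| := by
    rcases hσ i with h | h <;> rw [h] <;> simp
  have hclose : |M.σ k.castSucc z - m| ≤ ε := by
    refine (abs_sub_le_abs_pow_sub_pow hz0 hm' hp0).trans (le_trans ?_ hk)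
    have hgap := abs_abs_sub_abs_le (M.σ k.castSucc y) (m ^ p)
    rwa [← hpow, abs_of_nonneg hz0, abs_of_nonneg (by positivity : (0 : ℝ) ≤ (m : ℝ) ^ p)] at hgap
  have hsmall (i : Fin d) : |M.σ i.castSucc z| ≤ R / 2 := by
    refine le_of_pow_le_pow_of_le (by omega : 1 ≤ p) one_ne_zero (by linarith) ?_
    rw [hpow, pow_one]
    linarith [hR i]
  have hbig : |M.σ (Fin.last d) z| ≤ B :=
    le_of_pow_le_pow_of_le hp two_ne_zero hB ((hpow _).trans_le hlast)
  have hzm : z = m := by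
    refine M.eq_of_prod_abs_sub_lt_one (lt_of_le_of_lt ?_ hlt)
    refine prod_univ_le_mul_pow_mul (fun _ ↦ abs_nonneg _) (by linarith) (k := k) ?_ ?_ ?_
    · simpa using hclose
    · intro i
      refine (abs_sub _ _).trans ?_
      simp only [map_intCast, abs_of_nonneg (zero_le_one.trans hm')]
      linarith [hsmall i]
    · refine (abs_sub _ _).trans ?_
      simp only [map_intCast, abs_of_nonneg (zero_le_one.trans hm')]
      nlinarith
  rcases hyz with rfl | rfl
  · exact ⟨m ^ p, by rw [hzm, Int.cast_pow]⟩
  · exact ⟨-m ^ p, by rw [hzm, Int.cast_neg, Int.cast_pow]⟩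

theorem MarkedField.mul_add_one_ne_intCast {d : ℕ} (hd : d ≠ 0) (M : MarkedField (d + 1)) {u : ℤ}
    (hu : u ≠ 0) (a : ℤ) : u * M.x + 1 ≠ a := by
  intro ha
  have hσ (i) : u * M.σ i M.x + 1 = a := by
    simpa using congrArg (fun y : 𝓞 M.carrier ↦ M.σ i y) ha
  have heq : M.σ 0 M.x = M.σ (Fin.last d) M.x :=
    mul_left_cancel₀ (Int.cast_ne_zero.2 hu) (add_right_cancel ((hσ 0).trans (hσ _).symm))
  exact hd (Fin.ext_iff.1 (M.injective_apply heq)).symm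

namespace HasDominantLast

variable {d : ℕ} {u : ℤ} {b : Fin (d + 1) → ℤ} {R δ : ℝ}

theorem mul_mul_pow_mul_sqrt_lt_one (h : HasDominantLast u b R δ) :
    u * δ * R ^ d * (R * (R * √(b (Fin.last d)))) < 1 :=
  calc u * δ * R ^ d * (R * (R * √(b (Fin.last d))))
      = u * (δ * √(b (Fin.last d)) * R ^ (d + 2)) := by ring
    _ ≤ R * (δ * √(b (Fin.last d)) * R ^ (d + 2)) := by
        have := h.pos
        have := h.four_le
        gcongr
        linarith [h.two_mul_add_one_le]
    _ = δ * √(b (Fin.last d)) * R ^ (d + 3) := by ring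
    _ < 1 := h.mul_lt_one

theorem not_isPowUpToSign_mul_add_one (h : HasDominantLast u b R δ) (M : MarkedField (d + 1))
    (hM : ∀ i, |M.conj i - b i| ≤ δ) {p : ℕ} (hp : 2 ≤ p) {m : ℤ} (hm : 1 ≤ m) {k : Fin d}
    (hk : u * b k.castSucc + 1 = m ^ p) : ¬ IsPowUpToSign p (u * M.x + 1) := by
  intro hpow
  have hσ (i) : M.σ i ((u * M.x + 1 : 𝓞 M.carrier) : M.carrier) = u * M.conj i + 1 := by
    simp [MarkedField.conj]
  have hk' : (u : ℝ) * b k.castSucc + 1 = m ^ p := by exact_mod_cast hk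
  have hu : (1 : ℝ) ≤ u := by exact_mod_cast h.one_le
  have hm' : (1 : ℝ) ≤ m := by exact_mod_cast hm
  have hR := h.four_le
  have hsqrt : 1 ≤ √(b (Fin.last d) : ℝ) := Real.one_le_sqrt.2 (by linarith [h.mul_le_last])
  have hmR : 2 * (m : ℝ) ≤ R := by
    have hmp : (m : ℝ) ≤ m ^ p := le_self_pow₀ hm' (by omega)
    nlinarith [h.bound_le k, le_abs_self (b k.castSucc : ℝ)]
  have hclose : |u * M.conj k.castSucc + 1 - m ^ p| ≤ u * δ := by
    rw [← hk', add_sub_add_right_eq_sub, ← mul_sub, abs_mul, abs_of_nonneg (by linarith)]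
    exact mul_le_mul_of_nonneg_left (hM _) (by linarith)
  have hsmall (i : Fin d) : 2 * |u * M.conj i.castSucc + 1| ≤ R := by
    have hconj : |M.conj i.castSucc| ≤ |(b i.castSucc : ℝ)| + 1 := by
      linarith [abs_sub_abs_le_abs_sub (M.conj i.castSucc) (b i.castSucc), hM i.castSucc,
        h.le_quarter]
    linarith [abs_intCast_mul_add_one_le (zero_le_one.trans h.one_le) hconj, h.bound_le i]
  have hlast : |u * M.conj (Fin.last d) + 1| ≤ (R * √(b (Fin.last d))) ^ 2 := by
    refine (h.abs_mul_add_one_le_of_abs_sub_last_le (hM _)).trans ?_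
    rw [mul_pow, Real.sq_sqrt (by linarith [h.mul_le_last])]
    gcongr
    · linarith [h.mul_le_last]
    · exact le_self_pow₀ (by linarith) two_ne_zero
  simp only [← hσ] at hclose hsmall hlast
  obtain ⟨a, ha⟩ := M.exists_eq_intCast_of_isPowUpToSign hp hpow hm hmR
    (one_le_mul_of_one_le_of_one_le (by linarith) hsqrt) hclose hsmall hlast
    h.mul_mul_pow_mul_sqrt_lt_one
  have hd := h.two_le
  have hu0 := h.one_le
  exact M.mul_add_one_ne_intCast (by omega) (by omega) a ha

end HasDominantLast

theorem exists_forall_dvd_sub {ι : Type*} [Finite ι] {m : ι → ℤ}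
    (hm : Pairwise (Function.onFun IsCoprime m)) (a : ι → ℤ) : ∃ w, ∀ i, m i ∣ w - a i := by
  obtain ⟨w, hw⟩ := Ideal.exists_forall_sub_mem_ideal
    (fun i j hij ↦ (Ideal.isCoprime_span_singleton_iff _ _).2 (hm hij)) a
  exact ⟨w, fun i ↦ Ideal.mem_span_singleton.1 (hw i)⟩

/-- The residues of `b` at suitable primes dividing `u` follow every `residuePattern`. These are the
local conditions that make the elements `x - b i` independent modulo powers. -/
def HasResiduePatterns {d : ℕ} (ℓ : ℕ) (u : ℤ) (b : Fin (d + 1) → ℤ) : Prop :=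
  ∀ j : Fin d, ∃ (q : ℕ) (_ : Fact q.Prime) (g : (ZMod q)ˣ), (q : ℤ) ∣ u ∧
    IsSeparatingResidue ℓ d g ∧ ∀ i, (-b i : ZMod q) = residuePattern g j i

theorem HasResiduePatterns.congr {d ℓ : ℕ} {u : ℤ} {b c : Fin (d + 1) → ℤ}
    (hc : HasResiduePatterns ℓ u c) (hbc : ∀ i, u ∣ b i - c i) : HasResiduePatterns ℓ u b := by
  intro j
  obtain ⟨q, hq, g, hqu, hg, hpattern⟩ := hc j
  refine ⟨q, hq, g, hqu, hg, fun i ↦ ?_⟩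
  have hbi : ((b i - c i : ℤ) : ZMod q) = 0 :=
    (ZMod.intCast_zmod_eq_zero_iff_dvd _ _).2 (hqu.trans (hbc i))
  rw [Int.cast_sub, sub_eq_zero] at hbi
  rw [hbi, hpattern]

theorem infinite_setOf_prime_modEq_one_and_lt {m : ℕ} (hm : m ≠ 0) (a : ℕ) :
    {q : ℕ | q.Prime ∧ q ≡ 1 [MOD m] ∧ a < q}.Infinite := by
  refine Set.infinite_of_forall_exists_gt fun c ↦ ?_
  obtain ⟨q, hq, hprime, hmod⟩ :=
    Nat.forall_exists_prime_gt_and_modEq (q := m) (a := 1) (c + a) hm (by simp)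
  exact ⟨q, ⟨hprime, hmod, by omega⟩, by omega⟩

theorem exists_hasResiduePatterns {d ℓ : ℕ} (hd : d ≠ 0) (hℓ : ℓ ≠ 0) :
    ∃ (u : ℤ) (T : Fin (d + 1) → ℤ), 2 ≤ u ∧ HasResiduePatterns ℓ u fun i ↦ ℓ * T i := by
  let Q := (infinite_setOf_prime_modEq_one_and_lt (m := 2 * ℓ) (by omega) (ℓ + 3)).natEmbedding
  let q (j : Fin d) : ℕ := Q j
  have hprime (j) : Fact (q j).Prime := ⟨(Q j).2.1⟩
  have hlt (j) : ℓ + 3 < q j := (Q j).2.2.2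
  have hinj : Function.Injective q := fun i j hij ↦ Fin.ext (Q.injective (Subtype.ext hij))
  choose g hg using fun j : Fin d ↦ exists_isSeparatingResidue hℓ
    ((Nat.modEq_iff_dvd' (Nat.one_le_of_lt (hlt j))).1 (Q j).2.2.1.symm) (hlt j) d
  have hℓ0 (j) : (ℓ : ZMod (q j)) ≠ 0 := by
    rw [Ne, ZMod.natCast_eq_zero_iff]
    exact fun hdvd ↦ (Nat.le_of_dvd (by omega) hdvd).not_gt (by have := hlt j; omega)
  have hcop : Pairwise (Function.onFun IsCoprime fun j ↦ (q j : ℤ)) := fun i j hij ↦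
    Nat.isCoprime_iff_coprime.2
      ((Nat.coprime_primes (hprime i).out (hprime j).out).2 (hinj.ne hij))
  choose T hT using fun i ↦ exists_forall_dvd_sub hcop fun j ↦
    (-(residuePattern (g j) j i : ZMod (q j)) / ℓ).val
  refine ⟨∏ j, (q j : ℤ), T, ?_, fun j ↦
    ⟨q j, hprime j, g j, dvd_prod_of_mem _ (mem_univ j), hg j, fun i ↦ ?_⟩⟩
  · have hdvd : q ⟨0, hd.bot_lt⟩ ∣ ∏ j, q j := dvd_prod_of_mem _ (mem_univ _)
    exact_mod_cast (hprime _).out.two_le.trans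
      (Nat.le_of_dvd (prod_pos fun j _ ↦ (hprime j).out.pos) hdvd)
  · have hTi := (ZMod.intCast_zmod_eq_zero_iff_dvd _ _).2 (hT i j)
    rw [Int.cast_sub, sub_eq_zero, Int.cast_natCast, ZMod.natCast_zmod_val] at hTi
    push_cast
    rw [hTi, mul_div_cancel₀ _ (hℓ0 j), neg_neg]

theorem exists_mul_add_one_eq_pow {u T w : ℤ} (hw : u ^ 2 ∣ w - (1 + u * T)) (ℓ : ℕ) :
    ∃ a, u * a + 1 = w ^ ℓ ∧ u ∣ a - ℓ * T := by
  obtain ⟨s, hs⟩ := hw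
  induction ℓ with
  | zero => exact ⟨0, by simp, by simp⟩
  | succ ℓ ih =>
    obtain ⟨a, ha, c, hc⟩ := ih
    refine ⟨a * w + T + u * s, ?_, c + s + a * (T + u * s), ?_⟩
    · rw [pow_succ, ← ha]
      linear_combination -hs
    · push_cast
      linear_combination hc + a * hs

theorem exists_injective_mul_add_one_eq_pow {d ℓ : ℕ} (hℓ : ℓ ≠ 0) {u : ℤ} (hu : 1 ≤ u)
    (T : Fin d → ℤ) : ∃ b t : Fin d → ℤ, Function.Injective b ∧
      ∀ i, 1 ≤ t i ∧ IsCoprime (t i) u ∧ u * b i + 1 = t i ^ ℓ ∧ u ∣ b i - ℓ * T i := by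
  let τ (i : Fin d) : ℤ := T i % u + u * i
  have hτ (i) : 0 ≤ τ i := add_nonneg (Int.emod_nonneg _ (by omega)) (by positivity)
  have hτinj : Function.Injective τ := by
    have hdiv (i) : τ i / u = i := by
      rw [Int.add_mul_ediv_left _ _ (by omega), Int.ediv_eq_zero_of_lt
        (Int.emod_nonneg _ (by omega)) (Int.emod_lt_of_pos _ (by omega)), zero_add]
    intro i j hij
    exact Fin.ext (by exact_mod_cast (hdiv i).symm.trans ((congrArg (· / u) hij).trans (hdiv j)))
  have hdvd (i) : u ^ 2 ∣ 1 + u * τ i - (1 + u * T i) := by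
    refine ⟨i - T i / u, ?_⟩
    linear_combination u * Int.emod_add_mul_ediv (T i) u
  choose b hb hbT using fun i ↦ exists_mul_add_one_eq_pow (hdvd i) ℓ
  refine ⟨b, fun i ↦ 1 + u * τ i, fun i j hij ↦ hτinj ?_, fun i ↦
    ⟨by nlinarith [hτ i], ⟨1, -τ i, by ring⟩, hb i, hbT i⟩⟩
  have hpow : (1 + u * τ i) ^ ℓ = (1 + u * τ j) ^ ℓ := by rw [← hb, ← hb, hij]
  have ht : 1 + u * τ i = 1 + u * τ j :=
    (pow_left_inj₀ (by nlinarith [hτ i]) (by nlinarith [hτ j]) hℓ).1 hpow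
  exact mul_left_cancel₀ (by omega) (add_left_cancel ht)

theorem isCoprime_prod_neg_pow_sub_pow {d ℓ m : ℕ} {u : ℤ} (hm : m ≠ 0) {t : Fin d → ℤ}
    (htu : ∀ i, IsCoprime (t i) u) : IsCoprime (∏ j, (-t j ^ ℓ) - u ^ m) u := by
  rw [← Nat.succ_pred_eq_of_ne_zero hm, sub_eq_add_neg, pow_succ', ← mul_neg]
  exact (IsCoprime.prod_left fun j _ ↦ (htu j).pow_left.neg_left).add_mul_left_left _

theorem isCoprime_sub_pow_of_dvd {a c u : ℤ} (hau : IsCoprime a u) (hac : a ∣ c) (m : ℕ) :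
    IsCoprime a (c - u ^ m) := by
  obtain ⟨s, rfl⟩ := hac
  rw [sub_eq_neg_add]
  exact hau.pow_right.neg_right.add_mul_left_right s

theorem isCoprime_of_isCoprime_of_dvd_sub {a c w : ℤ} (ha : IsCoprime a c) (h : c ∣ w - a) :
    IsCoprime w c := by
  obtain ⟨s, hs⟩ := h
  rw [← sub_add_cancel w a, hs, add_comm]
  exact ha.add_mul_left_left s

theorem exists_residueClass_dvd_and_isCoprime {d ℓ m : ℕ} (hℓ : ℓ ≠ 0) (hm : m ≠ 0) {u : ℤ}
    (hu : 2 ≤ u) {t : Fin d → ℤ} (htu : ∀ i, IsCoprime (t i) u) (c : ℤ) :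
    ∃ w N : ℤ, 0 < N ∧ ∀ W, N ∣ W - w →
      (∀ i, t i ∣ W) ∧ IsCoprime W (∏ j, (-t j ^ ℓ) - u ^ m) ∧ u ^ 2 ∣ W - c := by
  set P := ∏ j, t j
  set B := ∏ j, (-t j ^ ℓ) - u ^ m
  have hPu : IsCoprime P u := IsCoprime.prod_left fun j _ ↦ htu j
  have hBu : IsCoprime B u := isCoprime_prod_neg_pow_sub_pow hm htu
  have hPB : IsCoprime P B := IsCoprime.prod_left fun j _ ↦ isCoprime_sub_pow_of_dvd (htu j)
    ((dvd_neg.2 (dvd_pow_self _ hℓ)).trans (dvd_prod_of_mem (fun j ↦ -t j ^ ℓ) (mem_univ j))) m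
  have hne {a : ℤ} (ha : IsCoprime a u) : a ≠ 0 := by
    rintro rfl
    rw [isCoprime_zero_left, Int.isUnit_iff] at ha
    omega
  have hcop : Pairwise (Function.onFun IsCoprime ![P, B, u ^ 2]) := by
    intro i j hij
    fin_cases i <;> fin_cases j <;>
      simp_all [Function.onFun, IsCoprime.pow_right, IsCoprime.pow_left, isCoprime_comm]
  obtain ⟨w, hw⟩ := exists_forall_dvd_sub hcop ![0, 1, c]
  obtain ⟨hwP, hwB, hwu⟩ : P ∣ w - 0 ∧ B ∣ w - 1 ∧ u ^ 2 ∣ w - c := ⟨hw 0, hw 1, hw 2⟩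
  have hP0 := hne hPu
  have hB0 := hne hBu
  refine ⟨w, (P * B * u ^ 2) ^ 2, by positivity, fun W hW ↦ ?_⟩
  have hlift {n a : ℤ} (hn : n ∣ P * B * u ^ 2) (ha : n ∣ w - a) : n ∣ W - a := by
    rw [← sub_add_sub_cancel W w a]
    exact dvd_add ((hn.trans (dvd_pow_self _ two_ne_zero)).trans hW) ha
  refine ⟨fun i ↦ (dvd_prod_of_mem t (mem_univ i)).trans ?_, ?_, hlift (Dvd.intro_left _ rfl) hwu⟩
  · simpa only [sub_zero] using hlift (Dvd.intro _ (mul_assoc P B (u ^ 2)).symm) hwP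
  · exact isCoprime_of_isCoprime_of_dvd_sub isCoprime_one_left
      (hlift (Dvd.intro_left (P * u ^ 2) (by ring)) hwB)

theorem isCoprime_prod_sub_sub {ι : Type*} [Fintype ι] [DecidableEq ι] {ℓ : ℕ} (hℓ : ℓ ≠ 0)
    {u : ℤ} {b t : ι → ℤ} (hbt : ∀ i, u * b i + 1 = t i ^ ℓ) {i : ι}
    (hcop : IsCoprime (t i) (∏ j ∈ univ.erase i, (-t j ^ ℓ) - u ^ Fintype.card ι)) :
    IsCoprime (t i) (∏ j ∈ univ.erase i, (b i - b j) - u) := by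
  have hscale : u ^ #(univ.erase i) * (∏ j ∈ univ.erase i, (b i - b j) - u) =
      ∏ j ∈ univ.erase i, (t i ^ ℓ - t j ^ ℓ) - u ^ Fintype.card ι := by
    have hsub (j) : t i ^ ℓ - t j ^ ℓ = u * (b i - b j) := by rw [← hbt, ← hbt]; ring
    simp_rw [hsub, prod_mul_distrib, prod_const]
    rw [← card_univ, ← card_erase_add_one (mem_univ i), pow_succ, mul_sub]
  refine IsCoprime.of_mul_right_right (y := u ^ #(univ.erase i)) ?_
  rw [hscale]
  obtain ⟨s, hs⟩ := (dvd_pow_self (t i) hℓ).trans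
    (sub_zero (t i ^ ℓ) ▸ sub_dvd_prod_sub_sub_prod_sub (univ.erase i) (t i ^ ℓ) 0 fun j ↦ t j ^ ℓ)
  simp only [zero_sub] at hs
  rw [sub_eq_iff_eq_add.1 hs, add_comm, add_sub_right_comm]
  exact hcop.add_mul_left_right s

/-- The arithmetic conditions on the parameters `u` and `b` under which the elements `x - b i`
generate `ℓ`-th powers of ideals and are independent modulo powers, where `x` is a root of
`shiftedProd u b`. The `ℓ`-th roots of `u * b i + 1` are the entries of `t`. -/
structure IsAdmissible {d : ℕ} (ℓ : ℕ) (u : ℤ) (b t : Fin (d + 1) → ℤ) : Prop where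
  one_le_root (i) : 1 ≤ t i
  mul_add_one_eq (i) : u * b i + 1 = t i ^ ℓ
  isCoprime (i) : IsCoprime (t i) (∏ j ∈ univ.erase i, (b i - b j) - u)
  hasResiduePatterns : HasResiduePatterns ℓ u b

theorem prod_erase_last_snoc {d : ℕ} {α M : Type*} [CommMonoid M] (F : α → M) (t : Fin d → α)
    (a : α) : ∏ j ∈ univ.erase (Fin.last d), F ((Fin.snoc t a : Fin (d + 1) → α) j) =
      ∏ j, F (t j) := by
  simp [Fin.univ_castSuccEmb]

theorem exists_forall_isAdmissible {d ℓ : ℕ} (hd : d ≠ 0) (hℓ : ℓ ≠ 0) :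
    ∃ (u : ℤ) (b t : Fin d → ℤ) (w N : ℤ), 1 ≤ u ∧ Function.Injective b ∧ 0 < N ∧
      ∀ W, 1 ≤ W → N ∣ W - w →
        ∃ a : ℤ, IsAdmissible ℓ u (Fin.snoc b a : Fin (d + 1) → ℤ) (Fin.snoc t W) := by
  obtain ⟨u, T, hu, hT⟩ := exists_hasResiduePatterns hd hℓ
  obtain ⟨b, t, hb, hbt⟩ := exists_injective_mul_add_one_eq_pow hℓ (by omega : 1 ≤ u)
    fun i ↦ T i.castSucc
  choose ht htu hbt hbT using hbt
  obtain ⟨w, N, hN, hmod⟩ := exists_residueClass_dvd_and_isCoprime hℓ (Nat.succ_ne_zero d) hu htu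
    (1 + u * T (Fin.last d))
  refine ⟨u, b, t, w, N, by omega, hb, hN, fun W hW hWN ↦ ?_⟩
  obtain ⟨htW, hcop, hWu⟩ := hmod W hWN
  obtain ⟨a, ha, haT⟩ := exists_mul_add_one_eq_pow hWu ℓ
  have hbt' (i) : u * (Fin.snoc b a : Fin (d + 1) → ℤ) i + 1 =
      (Fin.snoc t W : Fin (d + 1) → ℤ) i ^ ℓ := by
    induction i using Fin.lastCases with
    | last => simpa using ha
    | cast i => simpa using hbt i
  refine ⟨a, fun i ↦ ?_, hbt', fun i ↦ isCoprime_prod_sub_sub hℓ hbt' ?_,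
    hT.congr fun i ↦ ?_⟩
  · induction i using Fin.lastCases with
    | last => simpa using hW
    | cast i => simpa using ht i
  · rw [Fintype.card_fin]
    induction i using Fin.lastCases with
    | last =>
      rw [prod_erase_last_snoc fun s ↦ -s ^ ℓ, Fin.snoc_last]
      exact hcop
    | cast i =>
      refine isCoprime_sub_pow_of_dvd (by simpa using htu i) ?_ _
      refine Dvd.dvd.trans ?_ (dvd_prod_of_mem _
        (mem_erase.2 ⟨(Fin.castSucc_lt_last i).ne', mem_univ (Fin.last d)⟩))
      rw [Fin.snoc_castSucc, Fin.snoc_last]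
      exact dvd_neg.2 ((htW i).trans (dvd_pow_self _ hℓ))
  · induction i using Fin.lastCases with
    | last => simpa using haT
    | cast i => simpa using hbT i

theorem MarkedField.aeval_conj_eq_zero {n : ℕ} (M : MarkedField n) {f : ℤ[X]}
    (hx : aeval M.x f = 0) (i : Fin n) : aeval (M.conj i) f = 0 := by
  let φ := ((M.σ i).comp (algebraMap (𝓞 M.carrier) M.carrier)).toIntAlgHom
  exact (aeval_algHom_apply φ M.x f).trans (by rw [hx, map_zero])

namespace IsAdmissible

variable {d ℓ : ℕ} {u : ℤ} {b t : Fin (d + 1) → ℤ}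

theorem mul_add_one_ne_zero (h : IsAdmissible ℓ u b t) (i : Fin (d + 1)) : u * b i + 1 ≠ 0 := by
  rw [h.mul_add_one_eq]
  exact pow_ne_zero _ (zero_lt_one.trans_le (h.one_le_root i)).ne'

theorem sub_intCast_ne_zero {R : Type*} [CommRing R] [CharZero R] (h : IsAdmissible ℓ u b t)
    {x : R} (hx : ∏ i, (x - b i) = u * x + 1) (i : Fin (d + 1)) : x - b i ≠ 0 := by
  intro hi
  rw [prod_eq_zero (mem_univ i) hi, sub_eq_zero.1 hi] at hx
  exact h.mul_add_one_ne_zero i (by exact_mod_cast hx.symm)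

theorem exists_ringHom_zmod_eq_zero {K : Type*} [Field K] [NumberField K]
    (h : IsAdmissible ℓ u b t) (hmonic : (shiftedProd u b).Monic)
    (hirr : Irreducible (shiftedProd u b)) {x : 𝓞 K} (hx : aeval x (shiftedProd u b) = 0)
    (hdeg : (shiftedProd u b).natDegree = Module.finrank ℚ K) (j : Fin d) :
    ∃ (q : ℕ) (_ : Fact q.Prime) (g : (ZMod q)ˣ) (Ψ : 𝓞 K →+* ZMod q),
      IsSeparatingResidue ℓ d g ∧ Ψ x = 0 ∧ ∀ i, (-b i : ZMod q) = residuePattern g j i := by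
  obtain ⟨q, _, g, hqu, hg, hpattern⟩ := h.hasResiduePatterns j
  have hprod : ∏ i, residuePattern g j i = 1 := by
    simpa only [pow_one, mul_inv_cancel] using prod_residuePattern_pow g j fun _ ↦ 1
  have hsimple : (((shiftedProd u b).derivative.eval 0 : ℤ) : ZMod q) ≠ 0 := by
    rw [eval_zero_derivative_shiftedProd_zmod ((ZMod.intCast_zmod_eq_zero_iff_dvd _ _).2 hqu)
      hpattern hprod, sum_inv_residuePattern]
    exact hg.add_inv_add_ne_zero
  obtain ⟨Ψ, hΨ⟩ := exists_ringHom_zmod hmonic hirr hx hdeg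
    (eval_zero_shiftedProd_zmod hpattern hprod) hsimple
  exact ⟨q, _, g, Ψ, hg, by rw [hΨ, Int.cast_zero], hpattern⟩

variable {R δ : ℝ}

theorem isIndepModPow_sub_intCast (h : IsAdmissible ℓ u b t) (hdom : HasDominantLast u b R δ)
    (M : MarkedField (d + 1)) (hM : ∀ i, |M.conj i - b i| ≤ δ)
    (hx : aeval M.x (shiftedProd u b) = 0) {p : ℕ} (hp : p.Prime) (hpℓ : p ∣ ℓ) :
    IsIndepModPow p fun i ↦ M.x - (b i : 𝓞 M.carrier) := by
  have hcard := hdom.one_lt_card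
  refine _root_.isIndepModPow_sub_intCast hp hpℓ (h.exists_ringHom_zmod_eq_zero
    (monic_shiftedProd hcard) (hdom.irreducible_shiftedProd hM h.mul_add_one_ne_zero
      (M.aeval_conj_eq_zero hx)) hx ((natDegree_shiftedProd hcard).trans M.finrank_eq_card.symm)) ?_
  rw [aeval_shiftedProd, sub_eq_zero] at hx
  rw [hx]
  have hd : 0 < d := by linarith [hdom.two_le]
  obtain ⟨s, rfl⟩ := hpℓ
  have hpow : u * b (Fin.castSucc ⟨0, hd⟩) + 1 = (t (Fin.castSucc ⟨0, hd⟩) ^ s) ^ p := by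
    rw [h.mul_add_one_eq, mul_comm, pow_mul]
  exact hdom.not_isPowUpToSign_mul_add_one M hM hp.two_le (one_le_pow₀ (h.one_le_root _)) hpow

theorem exists_orderOf_classGroup_eq (h : IsAdmissible ℓ u b t) (hℓ : ℓ ≠ 0)
    (hdom : HasDominantLast u b R δ) (M : MarkedField (d + 1)) (hM : ∀ i, |M.conj i - b i| ≤ δ)
    (hx : aeval M.x (shiftedProd u b) = 0) : ∃ c : ClassGroup (𝓞 M.carrier), orderOf c = ℓ := by
  have hprod := sub_eq_zero.1 ((aeval_shiftedProd u b M.x).symm.trans hx)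
  exact _root_.exists_orderOf_classGroup_eq (M.σ 0) hℓ
    (unitsRank_lt_finrank.trans_eq M.finrank_eq_card)
    (h.sub_intCast_ne_zero hprod)
    (fun i ↦ span_sub_intCast_eq_pow hprod (h.mul_add_one_eq i) (h.isCoprime i))
    fun _ hp hpℓ ↦ h.isIndepModPow_sub_intCast hdom M hM hx hp hpℓ

end IsAdmissible

theorem HasDominantLast.exists_markedField {d : ℕ} {u : ℤ} {b : Fin (d + 1) → ℤ} {R δ : ℝ}
    (h : HasDominantLast u b R δ) (hne : ∀ i, u * b i + 1 ≠ 0) :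
    ∃ M : MarkedField (d + 1), (∀ i, |M.conj i - b i| ≤ δ) ∧ aeval M.x (shiftedProd u b) = 0 := by
  have hcard := h.one_lt_card
  obtain ⟨ρ, hρ⟩ := h.exists_roots
  choose hρ hroots using hρ
  obtain ⟨M, rfl, hx⟩ := MarkedField.exists_conj_eq (monic_shiftedProd hcard)
    (h.irreducible_shiftedProd hρ hne hroots) (h.injective_of_abs_sub_le hρ) hroots
    ((natDegree_shiftedProd hcard).trans (Fintype.card_fin _))
  exact ⟨M, hρ, hx⟩

theorem HasDominantLast.abs_discr_le {d : ℕ} {u : ℤ} {b : Fin (d + 1) → ℤ} {R δ : ℝ}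
    (h : HasDominantLast u b R δ) (M : MarkedField (d + 1)) (hM : ∀ i, |M.conj i - b i| ≤ δ) :
    |(discr M.carrier : ℝ)| ≤ ((2 * b (Fin.last d) * R ^ d) ^ d) ^ 2 := by
  have hlast := h.mul_le_last
  have hR := h.four_le
  have hconj_last : |M.conj (Fin.last d)| ≤ b (Fin.last d) + δ := by
    have := abs_sub_abs_le_abs_sub (M.conj (Fin.last d)) (b (Fin.last d))
    rw [abs_of_nonneg (a := (b (Fin.last d) : ℝ)) (by linarith)] at this
    linarith [hM (Fin.last d)]
  refine M.abs_discr_le (by linarith) (fun i j ↦ ?_) fun i ↦ ?_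
  · linarith [abs_sub (M.conj j.castSucc) (M.conj i.castSucc), h.abs_castSucc_le hM i,
      h.abs_castSucc_le hM j]
  · linarith [abs_sub (M.conj (Fin.last d)) (M.conj i.castSucc), h.abs_castSucc_le hM i,
      h.le_quarter]

theorem eventually_hasDominantLast {d : ℕ} (hd : 2 ≤ d) {u : ℤ} (hu : 1 ≤ u) {b : Fin d → ℤ}
    (hb : Function.Injective b) {R : ℝ} (hR : ∀ i, 2 * (u * (|(b i : ℝ)| + 1) + 1) ≤ R) :
    ∀ᶠ a : ℤ in atTop, HasDominantLast u (Fin.snoc b a : Fin (d + 1) → ℤ) R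
      (2 ^ (d + 1) * R / a) := by
  have hRpos : 0 < R := by
    have : (1 : ℝ) ≤ u := by exact_mod_cast hu
    exact lt_of_lt_of_le (by positivity) (hR ⟨0, by omega⟩)
  have hcast : Tendsto (fun a : ℤ ↦ (a : ℝ)) atTop atTop := tendsto_intCast_atTop_atTop
  have hquarter : ∀ᶠ a : ℤ in atTop, 2 ^ (d + 1) * R / a ≤ 1 / 4 :=
    (hcast.const_div_atTop _).eventually_le_const (by norm_num)
  have hsqrt : ∀ᶠ a : ℤ in atTop, 2 ^ (d + 1) * R * R ^ (d + 3) / √a < 1 :=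
    ((Real.tendsto_sqrt_atTop.comp hcast).const_div_atTop _).eventually_lt_const one_pos
  filter_upwards [hquarter, hsqrt, eventually_gt_atTop 0,
    eventually_all.2 fun i ↦ eventually_gt_atTop (b i)] with a hquarter hsqrt ha hab
  have ha' : (0 : ℝ) < a := by exact_mod_cast ha
  have hrange : a ∉ Set.range b := by
    rintro ⟨i, rfl⟩
    exact (hab i).false
  refine ⟨hd, hu, Fin.snoc_injective_of_injective hb hrange, fun i ↦ ?_, by positivity, hquarter,
    ?_, ?_⟩
  · simpa only [Fin.snoc_castSucc] using hR i
  · rw [Fin.snoc_last, div_mul_cancel₀ _ ha'.ne']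
  · rw [Fin.snoc_last]
    calc _ = 2 ^ (d + 1) * R * R ^ (d + 3) * (√a / a) := by ring
      _ = 2 ^ (d + 1) * R * R ^ (d + 3) / √a := by rw [Real.sqrt_div_self', mul_one_div]
      _ < 1 := hsqrt

theorem exists_arithProg_between {N : ℤ} (hN : 0 < N) (w : ℤ) (m : ℕ) :
    ∃ W : ℕ → ℤ, Function.Injective W ∧ ∀ k : ℕ,
      N ∣ W k - w ∧ k + m ≤ W k ∧ W k ≤ N * (m + 1) * (k + 1) := by
  have hrem := Int.emod_nonneg w hN.ne'
  have hrem' := Int.emod_lt_of_pos w hN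
  refine ⟨fun k ↦ w % N + N * (k + m), fun k k' hkk' ↦ ?_, fun k ↦ ⟨?_, ?_, ?_⟩⟩
  · have := mul_left_cancel₀ hN.ne' (add_left_cancel hkk')
    omega
  · exact ⟨k + m - w / N, by linear_combination Int.emod_add_mul_ediv w N⟩
  · nlinarith
  · have : 0 ≤ N * (k * m) := by positivity
    linarith [mul_comm (k : ℤ) m]

theorem exists_seq_of_eventually {u N w : ℤ} {ℓ : ℕ} (hu : 1 ≤ u) (hN : 0 < N) (hℓ : ℓ ≠ 0)
    {P Q : ℤ → Prop} (hP : ∀ W, 1 ≤ W → N ∣ W - w → ∃ a, u * a + 1 = W ^ ℓ ∧ P a)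
    (hQ : ∀ᶠ a in atTop, Q a) :
    ∃ (E : ℤ) (a : ℕ → ℤ), Function.Injective a ∧ ∀ k : ℕ,
      P (a k) ∧ Q (a k) ∧ 0 < a k ∧ (k + 1) ^ ℓ ≤ E * a k ∧ a k ≤ E * (k + 1) ^ ℓ := by
  obtain ⟨A, hA⟩ := eventually_atTop.1 (hQ.and (eventually_gt_atTop 0))
  obtain ⟨m, hm⟩ : ∃ m : ℕ, u * A + 1 ≤ m := ⟨_, Int.self_le_toNat _⟩
  have hm1 : 1 ≤ (m : ℤ) := by nlinarith [(hA A le_rfl).2]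
  obtain ⟨W, hWinj, hW⟩ := exists_arithProg_between hN w m
  choose hdvd hlow hupp using hW
  have hW1 (k) : 1 ≤ W k := by linarith [hlow k]
  choose a ha hPa using fun k ↦ hP (W k) (hW1 k) (hdvd k)
  have hAa (k) : A ≤ a k := by
    refine le_of_mul_le_mul_left ?_ (by omega : 0 < u)
    linarith [le_self_pow₀ (hW1 k) hℓ, ha k, hlow k]
  have hapos (k) : 0 < a k := (hA _ (hAa k)).2
  refine ⟨u + 1 + (N * (m + 1)) ^ ℓ, a, fun k k' hkk' ↦ hWinj ?_, fun k ↦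
    ⟨hPa k, (hA _ (hAa k)).1, hapos k, ?_, ?_⟩⟩
  · refine (pow_left_inj₀ (by linarith [hW1 k]) (by linarith [hW1 k']) hℓ).1 ?_
    rw [← ha, ← ha, hkk']
  · have hpow : ((k : ℤ) + 1) ^ ℓ ≤ W k ^ ℓ :=
      pow_le_pow_left₀ (by positivity) (by linarith [hlow k]) ℓ
    have : 0 ≤ (N * (m + 1)) ^ ℓ * a k := by have := hapos k; positivity
    linarith [ha k, hapos k]
  · have hpow : W k ^ ℓ ≤ (N * (m + 1)) ^ ℓ * (k + 1) ^ ℓ := by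
      rw [← mul_pow]
      exact pow_le_pow_left₀ (by linarith [hW1 k]) (hupp k) ℓ
    have : 0 ≤ (u + 1) * ((k : ℤ) + 1) ^ ℓ := by positivity
    nlinarith [ha k, hapos k]

/-- The conjugates of the `k`-th generator are within `E / (k + 1) ^ ℓ` of the fixed numbers `b i`,
except for the last one, which is within `1 / 4` of an integer `a k` of size at most
`E * (k + 1) ^ ℓ`. The shift by `1` makes the bounds meaningful at `k = 0`. -/
structure IsConcentrated {d : ℕ} (ℓ : ℕ) (M : ℕ → MarkedField (d + 1)) (b : Fin d → ℝ)
    (a : ℕ → ℤ) (E : ℝ) : Prop where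
  injective : Function.Injective a
  nonneg (k) : 0 ≤ a k
  le (k) : a k ≤ E * ((k : ℝ) + 1) ^ ℓ
  abs_sub_le (k) (i : Fin d) : |(M k).conj i.castSucc - b i| ≤ E / ((k : ℝ) + 1) ^ ℓ
  abs_sub_last_le (k) : |(M k).conj (Fin.last d) - a k| ≤ 1 / 4

theorem eventually_div_pow_mul_lt_one {d : ℕ} (hd : 2 ≤ d) (a c : ℝ) :
    ∀ᶠ y in atTop, (a / y) ^ d * (c * y + 1) < 1 := by
  obtain ⟨d, rfl⟩ := Nat.exists_eq_add_of_le' hd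
  have hdiv : Tendsto (fun y : ℝ ↦ a / y) atTop (𝓝 0) := tendsto_id.const_div_atTop a
  have hlim : Tendsto (fun y : ℝ ↦ (a / y) ^ (d + 1) * (a * c + a / y)) atTop (𝓝 0) := by
    simpa using (hdiv.pow (d + 1)).mul (hdiv.const_add (a * c))
  filter_upwards [hlim.eventually_lt_const one_pos, eventually_gt_atTop 0] with y hy hy0
  refine lt_of_eq_of_lt ?_ hy
  linear_combination (a / y) ^ (d + 1) * c * div_mul_cancel₀ a hy0.ne'

namespace IsConcentrated

variable {d ℓ : ℕ} {M : ℕ → MarkedField (d + 1)} {b : Fin d → ℝ} {a : ℕ → ℤ} {E : ℝ}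

theorem injective_conj (h : IsConcentrated ℓ M b a E) : Function.Injective fun k ↦ (M k).conj := by
  intro k k' hkk'
  by_contra hne
  have hconj : (M k).conj (Fin.last d) = (M k').conj (Fin.last d) := congrFun hkk' _
  have hlast := h.abs_sub_last_le k
  rw [abs_sub_comm] at hlast
  have hlast' := h.abs_sub_last_le k'
  rw [← hconj] at hlast'
  linarith [one_le_abs_sub_intCast (h.injective.ne hne),
    _root_.abs_sub_le (a k : ℝ) ((M k).conj (Fin.last d)) (a k')]

theorem constant_nonneg (h : IsConcentrated ℓ M b a E) : 0 ≤ E := by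
  have hle := h.le 0
  rw [Nat.cast_zero, zero_add, one_pow, mul_one] at hle
  exact (Int.cast_nonneg (h.nonneg 0)).trans hle

theorem prod_abs_sub_le (h : IsConcentrated ℓ M b a E) {R k k' : ℕ} (hR : R ≠ 0)
    (hk : k ∈ Ico R (2 * R)) (hk' : k' ∈ Ico R (2 * R)) :
    ∏ i, |(M k).conj i - (M k').conj i| ≤
      (2 * E / (R : ℝ) ^ ℓ) ^ d * (E * 2 ^ ℓ * (R : ℝ) ^ ℓ + 1) := by
  have hE := h.constant_nonneg
  have : (0 : ℝ) < R := by exact_mod_cast hR.pos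
  have hclose {k : ℕ} (hk : k ∈ Ico R (2 * R)) (i : Fin d) :
      |(M k).conj i.castSucc - b i| ≤ E / (R : ℝ) ^ ℓ := by
    have : (R : ℝ) ≤ k + 1 := by exact_mod_cast (mem_Ico.1 hk).1.trans k.le_succ
    exact (h.abs_sub_le k i).trans (by gcongr)
  have hsize {k : ℕ} (hk : k ∈ Ico R (2 * R)) : (a k : ℝ) ≤ E * 2 ^ ℓ * (R : ℝ) ^ ℓ := by
    have : (k : ℝ) + 1 ≤ 2 * R := by exact_mod_cast (mem_Ico.1 hk).2
    rw [mul_assoc, ← mul_pow]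
    exact (h.le k).trans (by gcongr)
  have hnonneg (k) : (0 : ℝ) ≤ a k := Int.cast_nonneg (h.nonneg k)
  rw [Fin.prod_univ_castSucc]
  refine mul_le_mul ?_ ?_ (abs_nonneg _) (by positivity)
  · rw [← Fin.prod_const]
    refine prod_le_prod (fun _ _ ↦ abs_nonneg _) fun i _ ↦ ?_
    have hcomm := abs_sub_comm (b i) ((M k').conj i.castSucc)
    rw [mul_div_assoc, two_mul]
    exact (_root_.abs_sub_le _ (b i) _).trans (add_le_add (hclose hk i) (hcomm ▸ hclose hk' i))
  · have hlast := abs_le.1 (h.abs_sub_last_le k)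
    have hlast' := abs_le.1 (h.abs_sub_last_le k')
    rw [abs_le]
    constructor <;> linarith [hnonneg k, hnonneg k', hsize hk, hsize hk']

theorem eventually_card_le_factorial (h : IsConcentrated ℓ M b a E) (hd : 2 ≤ d) (hℓ : ℓ ≠ 0) :
    ∀ᶠ R : ℕ in atTop, ∀ k₀, ∀ F ⊆ Ico R (2 * R),
      (∀ k ∈ F, Nonempty ((M k).carrier ≃+* (M k₀).carrier)) → #F ≤ (d + 1).factorial := by
  have hpow : Tendsto (fun R : ℕ ↦ (R : ℝ) ^ ℓ) atTop atTop :=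
    (tendsto_pow_atTop hℓ).comp tendsto_natCast_atTop_atTop
  filter_upwards [hpow.eventually (eventually_div_pow_mul_lt_one hd (2 * E) (E * 2 ^ ℓ)),
    eventually_ne_atTop 0] with R hlt hR k₀ F hF hiso
  rw [← Fintype.card_coe]
  exact MarkedField.card_le_factorial_of_ringEquiv (fun k : F ↦ M k) (M k₀)
    (fun k ↦ hiso k k.2) (h.injective_conj.comp Subtype.val_injective)
    fun k k' _ ↦ (h.prod_abs_sub_le hR (hF k.2) (hF k'.2)).trans_lt hlt

end IsConcentrated

theorem isConcentrated_of_hasDominantLast {d ℓ : ℕ} {u E : ℤ} {b : Fin d → ℤ} {a : ℕ → ℤ} {R : ℝ}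
    {M : ℕ → MarkedField (d + 1)} (hinj : Function.Injective a)
    (hdom : ∀ k, HasDominantLast u (Fin.snoc b (a k) : Fin (d + 1) → ℤ) R
      (2 ^ (d + 1) * R / a k))
    (hM : ∀ k i, |(M k).conj i - (Fin.snoc b (a k) : Fin (d + 1) → ℤ) i| ≤
      2 ^ (d + 1) * R / a k)
    (hpos : ∀ k, 0 < a k) (hlow : ∀ k : ℕ, (k + 1) ^ ℓ ≤ E * a k)
    (hupp : ∀ k : ℕ, a k ≤ E * (k + 1) ^ ℓ) :
    IsConcentrated ℓ M (fun i ↦ b i) a ((2 ^ (d + 1) * R + 1) * E) := by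
  have hR : 0 < R := by linarith [(hdom 0).four_le]
  have hE : (0 : ℝ) < E := by
    exact_mod_cast pos_of_mul_pos_left (lt_of_lt_of_le (by positivity) (hlow 0)) (hpos 0).le
  refine ⟨hinj, fun k ↦ (hpos k).le, fun k ↦ ?_, fun k i ↦ ?_, fun k ↦ ?_⟩
  · calc (a k : ℝ) ≤ E * ((k : ℝ) + 1) ^ ℓ := by exact_mod_cast hupp k
      _ ≤ _ := by
        gcongr
        exact le_mul_of_one_le_left hE.le (le_add_of_nonneg_left (by positivity))
  · have ha : (0 : ℝ) < a k := by exact_mod_cast hpos k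
    have hlow' : ((k : ℝ) + 1) ^ ℓ ≤ E * a k := by exact_mod_cast hlow k
    calc _ ≤ 2 ^ (d + 1) * R / a k := by simpa only [Fin.snoc_castSucc] using hM k i.castSucc
      _ ≤ 2 ^ (d + 1) * R * E / ((k : ℝ) + 1) ^ ℓ := by
        rw [div_le_div_iff₀ ha (by positivity), mul_assoc _ (E : ℝ)]
        gcongr
      _ ≤ _ := by
        gcongr
        exact le_add_of_nonneg_right zero_le_one
  · simpa only [Fin.snoc_last] using (hM k (Fin.last d)).trans (hdom k).le_quarter

theorem exists_isConcentrated {d ℓ : ℕ} (hd : 2 ≤ d) (hℓ : ℓ ≠ 0) :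
    ∃ (M : ℕ → MarkedField (d + 1)) (b : Fin d → ℝ) (a : ℕ → ℤ) (E D : ℝ), 0 < D ∧
      IsConcentrated ℓ M b a E ∧ ∀ k : ℕ,
        |(discr (M k).carrier : ℝ)| ≤ D * ((k : ℝ) + 1) ^ (2 * d * ℓ) ∧
        ∃ c : ClassGroup (𝓞 (M k).carrier), orderOf c = ℓ := by
  obtain ⟨u, b, t, w, N, hu, hb, hN, hadm⟩ := exists_forall_isAdmissible (by omega : d ≠ 0) hℓ
  obtain ⟨R, hR⟩ := (Set.finite_range fun i ↦ 2 * (u * (|(b i : ℝ)| + 1) + 1)).bddAbove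
  rw [mem_upperBounds, Set.forall_mem_range] at hR
  have hadm' (W : ℤ) (hW : 1 ≤ W) (hWN : N ∣ W - w) : ∃ a, u * a + 1 = W ^ ℓ ∧
      ∃ t, IsAdmissible ℓ u (Fin.snoc b a : Fin (d + 1) → ℤ) t := by
    obtain ⟨a, ha⟩ := hadm W hW hWN
    exact ⟨a, by simpa using ha.mul_add_one_eq (Fin.last d), _, ha⟩
  obtain ⟨E, a, hinj, ha⟩ := exists_seq_of_eventually hu hN hℓ hadm'
    (eventually_hasDominantLast hd hu hb hR)
  choose hadm hdom hpos hlow hupp using ha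
  choose t ht using hadm
  choose M hM hx using fun k ↦ (hdom k).exists_markedField (ht k).mul_add_one_ne_zero
  have hRpos : 0 < R := by linarith [(hdom 0).four_le]
  refine ⟨M, _, a, _, ((2 * E * R ^ d) ^ d) ^ 2, ?_,
    isConcentrated_of_hasDominantLast hinj hdom hM hpos hlow hupp, fun k ↦ ⟨?_,
      (ht k).exists_orderOf_classGroup_eq hℓ (hdom k) (M k) (hM k) (hx k)⟩⟩
  · have hE : (0 : ℝ) < E := by
      exact_mod_cast pos_of_mul_pos_left (lt_of_lt_of_le (by positivity) (hlow 0)) (hpos 0).le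
    positivity
  · have ha : (0 : ℝ) < a k := by exact_mod_cast hpos k
    have hupp' : (a k : ℝ) ≤ E * ((k : ℝ) + 1) ^ ℓ := by exact_mod_cast hupp k
    calc _ ≤ ((2 * a k * R ^ d) ^ d) ^ 2 := by
          simpa only [Fin.snoc_last] using (hdom k).abs_discr_le (M k) (hM k)
      _ ≤ ((2 * (E * ((k : ℝ) + 1) ^ ℓ) * R ^ d) ^ d) ^ 2 := by gcongr
      _ = _ := by ring

theorem exists_pairwise_not_rel_of_card_le {α : Type*} (s : Setoid α) {B : ℕ} {I : Finset α}
    (hB : ∀ k₀, ∀ F ⊆ I, (∀ k ∈ F, s k k₀) → #F ≤ B) :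
    ∃ (m : ℕ) (g : Fin m → α),
      (∀ i, g i ∈ I) ∧ (∀ i j, i ≠ j → ¬ s (g i) (g j)) ∧ #I ≤ B * m := by
  classical
  let J : Finset (Quotient s) := I.image (Quotient.mk s)
  choose r hrI hr using fun q : J ↦ mem_image.1 q.2
  refine ⟨#J, r ∘ J.equivFin.symm, fun i ↦ hrI _, fun i j hij hs ↦ hij ?_, ?_⟩
  · have hmk := Quotient.sound hs
    rw [Function.comp_apply, Function.comp_apply, hr, hr] at hmk
    exact J.equivFin.symm.injective (Subtype.ext hmk)
  · refine card_le_mul_card_image I B fun q hq ↦ ?_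
    obtain ⟨k₀, -, rfl⟩ := mem_image.1 hq
    exact hB k₀ _ (filter_subset _ _) fun k hk ↦ Quotient.exact (mem_filter.1 hk).2

theorem exists_pairwise_not_rel_of_eventually_card_le (s : Setoid ℕ) {B : ℕ} (hB₀ : B ≠ 0)
    (hB : ∀ᶠ R : ℕ in atTop, ∀ k₀, ∀ F ⊆ Ico R (2 * R), (∀ k ∈ F, s k k₀) → #F ≤ B) :
    ∀ᶠ Y : ℝ in atTop, ∃ (m : ℕ) (g : Fin m → ℕ), Y / (4 * B) ≤ m ∧
      (∀ i j, i ≠ j → ¬ s (g i) (g j)) ∧ ∀ i, (g i : ℝ) + 1 ≤ Y := by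
  have hfloor : Tendsto (fun Y : ℝ ↦ ⌊Y / 2⌋₊) atTop atTop :=
    tendsto_nat_floor_atTop.comp (tendsto_id.atTop_div_const two_pos)
  filter_upwards [hfloor.eventually hB, eventually_ge_atTop 4] with Y hcard hY
  obtain ⟨m, g, hg, hgs, hm⟩ := exists_pairwise_not_rel_of_card_le s hcard
  have hle : (⌊Y / 2⌋₊ : ℝ) ≤ Y / 2 := Nat.floor_le (by positivity)
  refine ⟨m, g, ?_, hgs, fun i ↦ ?_⟩
  · rw [Nat.card_Ico, two_mul, Nat.add_sub_cancel] at hm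
    have hm' : (⌊Y / 2⌋₊ : ℝ) ≤ B * m := by exact_mod_cast hm
    rw [div_le_iff₀ (by positivity)]
    linarith [Nat.lt_floor_add_one (Y / 2)]
  · have : (g i : ℝ) + 1 ≤ 2 * ⌊Y / 2⌋₊ := by exact_mod_cast (mem_Ico.1 (hg i)).2
    linarith

theorem exists_rpow_le_card_of_eventually_card_le (s : Setoid ℕ) {B : ℕ} (hB₀ : B ≠ 0)
    (hB : ∀ᶠ R : ℕ in atTop, ∀ k₀, ∀ F ⊆ Ico R (2 * R), (∀ k ∈ F, s k k₀) → #F ≤ B)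
    {f : ℕ → ℝ} {D : ℝ} {e : ℕ} (hD : 0 < D) (he : e ≠ 0)
    (hf : ∀ k : ℕ, f k ≤ D * ((k : ℝ) + 1) ^ e) :
    ∃ X₀ c : ℝ, 0 < X₀ ∧ 0 < c ∧ ∀ X, X₀ < X → ∃ (m : ℕ) (g : Fin m → ℕ),
      c * X ^ (e : ℝ)⁻¹ ≤ m ∧ (∀ i j, i ≠ j → ¬ s (g i) (g j)) ∧ ∀ i, f (g i) ≤ X := by
  have hscale : Tendsto (fun X : ℝ ↦ (X / D) ^ (e : ℝ)⁻¹) atTop atTop :=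
    (tendsto_rpow_atTop (by positivity)).comp (tendsto_id.atTop_div_const hD)
  obtain ⟨X₀, hX₀⟩ := eventually_atTop.1
    (hscale.eventually (exists_pairwise_not_rel_of_eventually_card_le s hB₀ hB))
  refine ⟨max X₀ 1, (D ^ (e : ℝ)⁻¹)⁻¹ / (4 * B), by positivity, by positivity, fun X hX ↦ ?_⟩
  have hX0 : 0 < X := one_pos.trans (max_lt_iff.1 hX).2
  obtain ⟨m, g, hm, hgs, hg⟩ := hX₀ X (max_lt_iff.1 hX).1.le
  refine ⟨m, g, ?_, hgs, fun i ↦ ?_⟩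
  · rw [Real.div_rpow hX0.le hD.le] at hm
    convert hm using 1
    ring
  · calc f (g i) ≤ D * ((g i : ℝ) + 1) ^ e := hf _
      _ ≤ D * ((X / D) ^ (e : ℝ)⁻¹) ^ e := by
        gcongr
        exact hg i
      _ = X := by rw [Real.rpow_inv_natCast_pow (by positivity) he, mul_div_cancel₀ _ hD.ne']

/-- Let `n ≥ 3` and `ℓ ≥ 1` be integers and put `μ = 1/(2(n−1)ℓ)`.  There exist
`X₀ > 0` and `c > 0` (depending only on `n` and `ℓ`) such that for every real
`X > X₀` there exist at least `c·X^μ` pairwise non-isomorphic number fields of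
degree `n` over `ℚ`, with absolute discriminant at most `X`, whose ideal class
group contains an element of order exactly `ℓ`. -/
theorem class_group_element_of_order_count (n ℓ : ℕ) (hn : 3 ≤ n) (hℓ : 1 ≤ ℓ) :
    ∃ X₀ c : ℝ, 0 < X₀ ∧ 0 < c ∧
      ∀ X : ℝ, X₀ < X →
        ∃ (m : ℕ) (K : Fin m → IntermediateField ℚ ℂ),
          c * X ^ ((1 : ℝ) / (2 * ((n : ℝ) - 1) * (ℓ : ℝ))) ≤ (m : ℝ) ∧
          (∀ i j : Fin m, i ≠ j → IsEmpty ((K i) ≃+* (K j))) ∧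
          ∀ i : Fin m,
            ∃ h : FiniteDimensional ℚ (K i),
              Module.finrank ℚ (K i) = n ∧
              (haveI := h;
                |(NumberField.discr (K i) : ℝ)| ≤ X ∧
                ∃ C : ClassGroup (NumberField.RingOfIntegers (K i)), orderOf C = ℓ) := by
  obtain ⟨d, rfl⟩ : ∃ d, n = d + 1 := Nat.exists_eq_add_of_le' (by omega)
  obtain ⟨M, b, a, E, D, hD, hconc, hM⟩ :=
    exists_isConcentrated (by omega : 2 ≤ d) (by omega : ℓ ≠ 0)
  choose hdiscr hclass using hM
  let isoSetoid : Setoid ℕ := ⟨fun k k' ↦ Nonempty ((M k).carrier ≃+* (M k').carrier),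
    ⟨fun _ ↦ ⟨.refl _⟩, fun ⟨φ⟩ ↦ ⟨φ.symm⟩, fun ⟨φ⟩ ⟨ψ⟩ ↦ ⟨φ.trans ψ⟩⟩⟩
  obtain ⟨X₀, c, hX₀, hc, hcount⟩ := exists_rpow_le_card_of_eventually_card_le isoSetoid
    (d + 1).factorial_ne_zero (hconc.eventually_card_le_factorial (by omega) (by omega)) hD
    (mul_ne_zero (by omega) (by omega) : 2 * d * ℓ ≠ 0) hdiscr
  have hexp : (1 : ℝ) / (2 * (((d + 1 : ℕ) : ℝ) - 1) * ℓ) = ((2 * d * ℓ : ℕ) : ℝ)⁻¹ := by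
    push_cast
    rw [add_sub_cancel_right, one_div]
  rw [hexp]
  refine ⟨X₀, c, hX₀, hc, fun X hX ↦ ?_⟩
  obtain ⟨m, g, hm, hg, hgX⟩ := hcount X hX
  exact ⟨m, fun i ↦ (M (g i)).carrier, hm, fun i j hij ↦ not_nonempty_iff.1 (hg i j hij),
    fun i ↦ ⟨(M (g i)).finiteDimensional, (M (g i)).finrank_eq, hgX i, hclass (g i)⟩⟩
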